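/- If (58, 4) is a universal pair over ℕ, then (11, 1681043235226619916301182624511918527834137733707408448335539840) is a universal pair over ℤ. -/

import Mathlib

/-- A set `𝒜 ⊆ ℕ` is Diophantine if there are `ν ∈ ℕ` and a polynomial
`P ∈ ℤ[X₀, …, X_ν]` such that `a ∈ 𝒜 ↔ ∃ z ∈ ℕ^ν, P(a, z) = 0`. -/
def IsDiophantine (A : Set ℕ) : Prop :=
  ∃ (ν : ℕ) (P : MvPolynomial (Fin (ν + 1)) ℤ),
    ∀ a : ℕ, a ∈ A ↔ ∃ z : Fin ν → ℕ,
      MvPolynomial.eval (Fin.cons (a : ℤ) (fun i => (z i : ℤ))) P = 0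

/-- `(ν, δ)` is a universal pair over `ℕ`: every Diophantine set is represented
by a polynomial with `ν` unknowns ranging over `ℕ` and total degree `≤ δ`. -/
def IsUniversalPairNat (ν δ : ℕ) : Prop :=
  ∀ A : Set ℕ, IsDiophantine A →
    ∃ P : MvPolynomial (Fin (ν + 1)) ℤ, P.totalDegree ≤ δ ∧
      ∀ a : ℕ, a ∈ A ↔ ∃ z : Fin ν → ℕ,
        MvPolynomial.eval (Fin.cons (a : ℤ) (fun i => (z i : ℤ))) P = 0

/-- `(ν, δ)` is a universal pair over `ℤ`: every Diophantine set is represented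
by a polynomial with `ν` unknowns ranging over `ℤ` and total degree `≤ δ`. -/
def IsUniversalPairInt (ν δ : ℕ) : Prop :=
  ∀ A : Set ℕ, IsDiophantine A →
    ∃ P : MvPolynomial (Fin (ν + 1)) ℤ, P.totalDegree ≤ δ ∧
      ∀ a : ℕ, a ∈ A ↔ ∃ z : Fin ν → ℤ,
        MvPolynomial.eval (Fin.cons (a : ℤ) z) P = 0

/-!
Let `P` have degree at most `δ`. Unknowns `zᵢ < b` are coded by the single number
`g = ∑ zᵢ B ^ (δ + 1) ^ i` in a base `B` much larger than `b`. Since `(1 + a B + g) ^ δ` has all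
monomials in `a, z₁, …, z_ν` as coefficients of distinct powers of `B`, multiplying it by a suitable
polynomial in `B` puts `δ! P(a, z)` into one digit. Both requirements, that `g` is such a code and
that this digit vanishes, become the disjointness of the binary digits of two numbers `S` and `T`
when `b` is a power of two. By Kummer's theorem that amounts to a high power of `2` dividing a
central binomial coefficient.

A central binomial coefficient is, modulo every divisor of `V`, the integer part of
`(V + 1) ^ (2 X) / V ^ X`, hence close to a quotient of two Pell numbers with suitable bases.
Whether an integer is the Pell number of a given index can be expressed by one expression being a
square. The two squares, one divisibility and one inequality which result are combined into a single
equation with one additional natural unknown `n`. Of the natural unknowns, only `n` has to stay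
nonnegative: it is replaced by `u² + u + v² + v + t²`, which takes exactly the natural numbers as
values, because every number `4 n + 2` is a sum of three squares.
-/

namespace UniversalPair

open Pell

/-! ### Characterizing the Pell sequence by one square -/

section Pell

variable {a : ℕ} (a1 : 1 < a)

theorem yn_add_two_le (n : ℕ) : (yn a1 (n + 2) : ℤ) ≤ 2 * a * yn a1 (n + 1) := by
  have recurrence := yn_succ_succ a1 n
  zify at recurrence
  linarith [(yn a1 n).cast_nonneg (α := ℤ)]

theorem two_mul_sub_one_mul_yn_le (n : ℕ) : (2 * a - 1) * (yn a1 n : ℤ) ≤ yn a1 (n + 1) := by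
  cases n with
  | zero => simp
  | succ n =>
    have recurrence := yn_succ_succ a1 n
    have mono : yn a1 n ≤ yn a1 (n + 1) := (strictMono_y a1).monotone n.le_succ
    zify at recurrence mono
    linarith

theorem yn_succ_le_pow (n : ℕ) : (yn a1 (n + 1) : ℤ) ≤ (2 * a) ^ n := by
  induction n with
  | zero => simp
  | succ n ih =>
    calc (yn a1 (n + 2) : ℤ) ≤ 2 * a * yn a1 (n + 1) := yn_add_two_le a1 n
      _ ≤ 2 * a * (2 * a) ^ n := by gcongr
      _ = (2 * a) ^ (n + 1) := by ring

theorem pow_le_yn_succ (n : ℕ) : (2 * (a : ℤ) - 1) ^ n ≤ yn a1 (n + 1) := by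
  induction n with
  | zero => simp
  | succ n ih =>
    have ha : (0 : ℤ) ≤ 2 * a - 1 := by lia
    calc (2 * (a : ℤ) - 1) ^ (n + 1) = (2 * a - 1) * (2 * a - 1) ^ n := by ring
      _ ≤ (2 * a - 1) * yn a1 (n + 1) := by gcongr
      _ ≤ yn a1 (n + 2) := two_mul_sub_one_mul_yn_le a1 (n + 1)

theorem two_mul_le_yn {n : ℕ} (hn : 2 ≤ n) : 2 * n ≤ yn a1 n := by
  induction n, hn using Nat.le_induction with
  | base =>
    have recurrence := yn_succ_succ a1 0
    simp only [zero_add, yn_zero, yn_one] at recurrence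
    lia
  | succ n hn ih =>
    have growth := two_mul_sub_one_mul_yn_le a1 n
    zify at *
    nlinarith

theorem yn_intModEq (n : ℕ) : (yn a1 n : ℤ) ≡ n [ZMOD a - 1] := by
  have h := Int.natCast_modEq_iff.2 (yn_modEq_a_sub_one a1 n)
  rwa [Nat.cast_sub a1.le, Nat.cast_one] at h

/-- The expression `(a² - 1)c² + 1`. Over `ℤ` it is a square exactly when `|c|` is a term of the
Pell sequence `yn a`. -/
def pellSq {R : Type*} [CommRing R] (a c : R) : R := (a ^ 2 - 1) * c ^ 2 + 1

theorem pellSq_pos {a : ℤ} (ha : 1 < a) (c : ℤ) : 0 < pellSq a c := by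
  have : 0 ≤ (a ^ 2 - 1) * c ^ 2 := mul_nonneg (by nlinarith) (sq_nonneg c)
  unfold pellSq
  linarith

theorem pellSq_yn (n : ℕ) : pellSq (a : ℤ) (yn a1 n) = (xn a1 n : ℤ) ^ 2 := by
  have h := pell_eqz a1 n
  rw [dz_val] at h
  simp only [xz, yz, az] at h
  unfold pellSq
  linarith

theorem exists_abs_eq_yn {c : ℤ} (h : IsSquare (pellSq (a : ℤ) c)) :
    ∃ n, |c| = yn a1 n ∧ pellSq (a : ℤ) c = (xn a1 n : ℤ) ^ 2 := by
  obtain ⟨r, hr⟩ := h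
  obtain ⟨n, hx, hy⟩ := eq_pell a1 (x := r.natAbs) (y := c.natAbs) <| Nat.sub_eq_of_eq_add <| by
    zify
    rw [dz_val, abs_mul_abs_self, mul_assoc, abs_mul_abs_self, ← hr]
    simp only [pellSq, az]
    ring
  exact ⟨n, by rw [← hy, Int.natCast_natAbs], by rw [hr, ← hx, Int.natCast_natAbs, sq_abs, sq]⟩

theorem xn_two_mul (n : ℕ) : (xn a1 (2 * n) : ℤ) = 2 * (a ^ 2 - 1) * (yn a1 n : ℤ) ^ 2 + 1 := by
  have hadd := xn_add a1 n n
  have hsq := pellSq_yn a1 n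
  rw [← two_mul] at hadd
  zify at hadd
  rw [hadd, dz_val]
  simp only [pellSq, az] at hsq ⊢
  linarith

theorem dvd_sub_or_dvd_add_of_xn_dvd {n m j : ℕ} (hn : 0 < n) (hnm : 2 * n ≤ m)
    (h : (yn a1 j : ℤ) ^ 2 ≡ (yn a1 n : ℤ) ^ 2 [ZMOD xn a1 m]) :
    (2 * m : ℤ) ∣ j - n ∨ (2 * m : ℤ) ∣ j + n := by
  have doubled : xn a1 (2 * j) ≡ xn a1 (2 * n) [MOD xn a1 m] := by
    rw [← Int.natCast_modEq_iff, xn_two_mul, xn_two_mul]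
    exact (h.mul_left _).add_right 1
  rcases modEq_of_xn_modEq a1 (by lia) hnm doubled with hmod | hmod
  · obtain ⟨c, hc⟩ := (Nat.modEq_iff_dvd).1 hmod.symm
    exact .inl ⟨c, by push_cast at hc; linarith⟩
  · obtain ⟨c, hc⟩ := (Nat.modEq_zero_iff_dvd).1 hmod
    exact .inr ⟨c, by zify at hc; linarith⟩

theorem eq_of_modEq_of_abs_le {k : ℕ} (hk : 0 < k) (hak : 4 * k + 4 < a) {c : ℤ}
    (hc : c ≡ k [ZMOD a - 1]) (hle : |c| ≤ 2 * k) : c = k := by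
  have := Int.eq_zero_of_abs_lt_dvd hc.symm.dvd (by
    rw [abs_lt]; constructor <;> cases abs_cases c <;> lia)
  lia

theorem two_le_index {k n : ℕ} (hk : 2 ≤ k) (hak : 4 * k + 4 < a) {c : ℤ}
    (hc : c ≡ k [ZMOD a - 1]) (hn : |c| = yn a1 n) : 2 ≤ n := by
  by_contra! hlt
  have small : |c| ≤ 1 := by interval_cases n <;> simp [hn]
  have hck := eq_of_modEq_of_abs_le (by lia) hak hc (by lia)
  rw [hck, Nat.abs_cast] at small
  lia

theorem eq_yn_of_dvd_sub_or_add {k n : ℕ} (hk : 2 ≤ k) (hak : 4 * k + 4 < a) {c : ℤ}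
    (hc : c ≡ k [ZMOD a - 1]) (hn : |c| = yn a1 n) (h : c ∣ (k : ℤ) - n ∨ c ∣ (k : ℤ) + n) :
    c = yn a1 k := by
  have yn_mod := hn ▸ yn_intModEq a1 n
  have two_le := two_le_index a1 hk hak hc hn
  have hnc : 2 * (n : ℤ) ≤ |c| := by rw [hn]; exact_mod_cast two_mul_le_yn a1 two_le
  have large : 2 * (k : ℤ) < |c| := by
    by_contra! hle
    have hck := eq_of_modEq_of_abs_le (by lia) hak hc hle
    rw [hck, Nat.abs_cast] at yn_mod hnc
    have := Int.eq_zero_of_abs_lt_dvd yn_mod.dvd (by rw [abs_lt]; constructor <;> lia)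
    lia
  have hkn : k = n := by
    rcases h with h | h
    all_goals
      have := Int.eq_zero_of_abs_lt_dvd ((abs_dvd _ _).2 h) (by rw [abs_lt]; constructor <;> lia)
      lia
  subst hkn
  rcases abs_choice c with habs | habs
  · rw [← hn, habs]
  · rw [habs] at yn_mod
    have dvd_two_mul : (a : ℤ) - 1 ∣ 2 * k := by
      have := dvd_add hc.dvd yn_mod.dvd
      rwa [show (k : ℤ) - c + (k - -c) = 2 * k by ring] at this
    have := Int.le_of_dvd (by lia) dvd_two_mul
    lia

end Pell

theorem isSquare_and_isSquare_of_isSquare_mul {p q : ℤ} (hp : 0 ≤ p) (hq : 0 ≤ q)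
    (h : IsCoprime p q) (hsq : IsSquare (p * q)) : IsSquare p ∧ IsSquare q := by
  have left_factor {u v : ℤ} (hu : 0 ≤ u) (huv : IsCoprime u v) (hs : IsSquare (u * v)) :
      IsSquare u := by
    obtain ⟨r, hr⟩ := hs
    obtain ⟨s, rfl | rfl⟩ := Int.sq_of_isCoprime huv (hr.trans (sq r).symm)
    · exact ⟨s, sq s⟩
    · exact ⟨0, by nlinarith⟩
  exact ⟨left_factor hp h hsq, left_factor hq h.symm (mul_comm p q ▸ hsq)⟩

section PellTriple

variable {R : Type*} [CommRing R] (a k c x y : R)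

/-- The second Pell index `E = c²Dx`, with `D = pellSq a c`. -/
def pellE : R := c ^ 2 * pellSq a c * x

/-- `F = (a² - 1)E² + 1`. -/
def pellF : R := pellSq a (pellE a c x)

/-- The auxiliary base `G`, chosen so that `G ≡ a` modulo `F` and `G ≡ 1` modulo `c`. -/
def pellG : R := a + pellF a c x * (pellF a c x - a)

/-- The auxiliary index `H`, chosen so that `H ≡ c` modulo `F` and `H ≡ k` modulo `c`. -/
def pellH : R := c + pellF a c x * (k + y * c)

/-- The product `D F I` of three pairwise coprime Pell expressions, `I` being `(G² - 1)H² + 1`.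
It is a square for some `x ≠ 0` and `y` exactly when `c` is the `k`-th Pell number `yn a k`. -/
def pellTriple : R :=
  pellSq a c * pellF a c x * pellSq (pellG a c x) (pellH a k c x y)

end PellTriple

section PellTriple

variable {a k c x y : ℤ}

theorem pellF_eq : pellF a c x = 1 + pellSq a c * ((a ^ 2 - 1) * pellE a c x * c ^ 2 * x) := by
  rw [pellF, pellSq, pellE]
  ring

theorem isCoprime_pellSq_pellF : IsCoprime (pellSq a c) (pellF a c x) := by
  rw [pellF_eq]
  exact ⟨-((a ^ 2 - 1) * pellE a c x * c ^ 2 * x), 1, by ring⟩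

theorem isCoprime_pellSq_mul_pellF :
    IsCoprime (pellSq a c * pellF a c x) (pellSq (pellG a c x) (pellH a k c x y)) := by
  apply IsCoprime.mul_left
  · set s := (a ^ 2 - 1) * pellE a c x * c ^ 2 * x * (1 + pellF a c x - a) * (pellG a c x + 1) *
      pellH a k c x y ^ 2
    refine ⟨-s, 1, ?_⟩
    have hG : pellG a c x - 1 =
        pellSq a c * ((a ^ 2 - 1) * pellE a c x * c ^ 2 * x * (1 + pellF a c x - a)) := by
      rw [pellG, pellF_eq]
      ring
    rw [pellSq.eq_1 (pellG a c x)]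
    linear_combination (pellG a c x + 1) * pellH a k c x y ^ 2 * hG
  · have hI : pellSq (pellG a c x) (pellH a k c x y) = pellSq a c +
        ((2 * a * (pellF a c x - a) + pellF a c x * (pellF a c x - a) ^ 2) * pellH a k c x y ^ 2 +
        (a ^ 2 - 1) * (2 * c * (k + y * c) + pellF a c x * (k + y * c) ^ 2)) * pellF a c x := by
      rw [pellSq, pellSq, pellG, pellH]
      ring
    rw [hI]
    exact isCoprime_pellSq_pellF.symm.add_mul_right_right _

theorem pellE_ne_zero (ha : 1 < a) (hc : c ≠ 0) (hx : x ≠ 0) : pellE a c x ≠ 0 := by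
  have := (pellSq_pos ha c).ne'
  rw [pellE]
  positivity

theorem lt_pellF (ha : 1 < a) (hc : c ≠ 0) (hx : x ≠ 0) : a < pellF a c x := by
  have hE : 0 < pellE a c x ^ 2 := sq_pos_of_ne_zero (pellE_ne_zero ha hc hx)
  have hle : a ^ 2 - 1 ≤ (a ^ 2 - 1) * pellE a c x ^ 2 :=
    le_mul_of_one_le_right (by nlinarith) (by lia)
  rw [pellF, pellSq]
  nlinarith

theorem one_lt_pellG (ha : 1 < a) (hc : c ≠ 0) (hx : x ≠ 0) : 1 < pellG a c x := by
  rw [pellG]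
  nlinarith [lt_pellF ha hc hx]

theorem pellF_modEq_one : pellF a c x ≡ 1 [ZMOD c] := by
  refine (Int.modEq_iff_dvd.2 ⟨(a ^ 2 - 1) * pellE a c x * pellSq a c * c * x, ?_⟩).symm
  rw [pellF_eq]
  ring

theorem pellG_modEq_one : pellG a c x ≡ 1 [ZMOD c] := by
  have := (pellF_modEq_one (a := a) (c := c) (x := x))
  simpa [pellG] using (this.mul (this.sub_right a)).add_left a

theorem pellG_modEq_base : pellG a c x ≡ a [ZMOD pellF a c x] := by
  simp [pellG, Int.ModEq]

theorem pellH_modEq : pellH a k c x y ≡ c [ZMOD pellF a c x] := by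
  simp [pellH, Int.ModEq]

theorem pellH_modEq_index : pellH a k c x y ≡ k [ZMOD c] := by
  simpa [pellH, Int.ModEq] using
    ((pellF_modEq_one (a := a) (c := c) (x := x)).mul_right (k + y * c)).add_left c

end PellTriple

theorem isSquare_of_isSquare_pellTriple {a k c x y : ℤ} (ha : 1 < a) (hc : c ≠ 0) (hx : x ≠ 0)
    (h : IsSquare (pellTriple a k c x y)) :
    IsSquare (pellSq a c) ∧ IsSquare (pellF a c x) ∧
      IsSquare (pellSq (pellG a c x) (pellH a k c x y)) := by
  have hD := (pellSq_pos ha c).le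
  have hF : 0 ≤ pellF a c x := (pellSq_pos ha _).le
  have hI := (pellSq_pos (one_lt_pellG ha hc hx) (pellH a k c x y)).le
  obtain ⟨sDF, sI⟩ := isSquare_and_isSquare_of_isSquare_mul (mul_nonneg hD hF) hI
    isCoprime_pellSq_mul_pellF h
  obtain ⟨sD, sF⟩ := isSquare_and_isSquare_of_isSquare_mul hD hF isCoprime_pellSq_pellF sDF
  exact ⟨sD, sF, sI⟩

theorem dvd_sub_or_dvd_add_of_pellTriple {a G n m j : ℕ} (a1 : 1 < a) (G1 : 1 < G)
    {k c x y : ℤ} (hG : pellG (a : ℤ) c x = G) (hn : |c| = yn a1 n)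
    (hF : pellF (a : ℤ) c x = (xn a1 m : ℤ) ^ 2) (hj : |pellH (a : ℤ) k c x y| = yn G1 j)
    (hn0 : 0 < n) (hnm : 2 * n ≤ m) (hcm : c ∣ m) :
    c ∣ k - n ∨ c ∣ k + n := by
  have F_modEq {u v : ℤ} (h : u ≡ v [ZMOD pellF (a : ℤ) c x]) : u ≡ v [ZMOD xn a1 m] :=
    h.of_dvd (hF ▸ dvd_pow_self _ two_ne_zero)
  have yn_base : (yn G1 j : ℤ) ≡ yn a1 j [ZMOD xn a1 m] :=
    Int.natCast_modEq_iff.2 <| (xy_modEq_of_modEq G1 a1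
      (Int.natCast_modEq_iff.1 <| hG ▸ F_modEq pellG_modEq_base) j).2
  have sq_modEq : (yn a1 j : ℤ) ^ 2 ≡ (yn a1 n : ℤ) ^ 2 [ZMOD xn a1 m] := by
    rw [← hn, sq_abs]
    refine (yn_base.symm.pow 2).trans ?_
    rw [← hj, sq_abs]
    exact (F_modEq pellH_modEq).pow 2
  have j_mod_n : c ∣ j - n ∨ c ∣ (j : ℤ) + n :=
    (dvd_sub_or_dvd_add_of_xn_dvd a1 hn0 hnm sq_modEq).imp (hcm.mul_left 2).trans
      (hcm.mul_left 2).trans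
  have yn_mod : (yn G1 j : ℤ) ≡ j [ZMOD c] :=
    (yn_intModEq G1 j).of_dvd (hG ▸ pellG_modEq_one.symm.dvd)
  have k_mod_j : c ∣ k - j ∨ c ∣ k + j := by
    have hHk := (pellH_modEq_index (a := a) (k := k) (c := c) (x := x) (y := y)).symm
    rcases abs_choice (pellH (a : ℤ) k c x y) with habs | habs <;> rw [← hj, habs] at yn_mod
    · exact .inl (hHk.trans yn_mod).symm.dvd
    · refine .inr ?_
      simpa only [sub_neg_eq_add, add_comm] using (hHk.neg.trans yn_mod).dvd
  rcases k_mod_j with ⟨p, hp⟩ | ⟨p, hp⟩ <;> rcases j_mod_n with ⟨q, hq⟩ | ⟨q, hq⟩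
  · exact .inl ⟨p + q, by linear_combination hp + hq⟩
  · exact .inr ⟨p + q, by linear_combination hp + hq⟩
  · exact .inr ⟨p - q, by linear_combination hp - hq⟩
  · exact .inl ⟨p - q, by linear_combination hp - hq⟩

theorem eq_yn_of_isSquare_pellTriple {a k : ℕ} (a1 : 1 < a) (hk : 2 ≤ k) (hak : 4 * k + 4 < a)
    {c x y : ℤ} (hx : x ≠ 0) (hc : c ≡ k [ZMOD a - 1])
    (h : IsSquare (pellTriple (a : ℤ) k c x y)) : c = yn a1 k := by
  have ha : (1 : ℤ) < a := by exact_mod_cast a1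
  have hc0 : c ≠ 0 := by
    rintro rfl
    have := Int.le_of_dvd (by lia) hc.dvd
    lia
  obtain ⟨sD, sF, sI⟩ := isSquare_of_isSquare_pellTriple ha hc0 hx h
  obtain ⟨n, hn, -⟩ := exists_abs_eq_yn a1 sD
  obtain ⟨m, hm, hF⟩ := exists_abs_eq_yn a1 sF
  have G1 := one_lt_pellG ha hc0 hx
  obtain ⟨G, hG⟩ := Int.eq_ofNat_of_zero_le (zero_le_one.trans G1.le)
  rw [hG, Nat.one_lt_cast] at G1
  obtain ⟨j, hj, -⟩ := exists_abs_eq_yn G1 (hG ▸ sI)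
  have two_le := two_le_index a1 hk hak hc hn
  have m_pos : 0 < m := Nat.pos_of_ne_zero fun h0 ↦
    pellE_ne_zero ha hc0 hx (by simpa [h0] using hm)
  have yn_dvd_m : yn a1 n ∣ m := by
    apply dvd_of_ysq_dvd a1
    zify
    rw [← hn, ← hm, abs_mul_abs_self, dvd_abs, pellE]
    exact ⟨pellSq (a : ℤ) c * x, by ring⟩
  have c_dvd_m : c ∣ (m : ℤ) := by
    rw [← abs_dvd, hn]
    exact_mod_cast yn_dvd_m
  have two_mul_le : 2 * n ≤ m := (two_mul_le_yn a1 two_le).trans (Nat.le_of_dvd m_pos yn_dvd_m)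
  exact eq_yn_of_dvd_sub_or_add a1 hk hak hc hn
    (dvd_sub_or_dvd_add_of_pellTriple a1 G1 hG hn hF hj (by lia) two_mul_le c_dvd_m)

theorem not_isSquare_sq_sub_one_mul_sq {a q : ℤ} (ha : 1 < a) (hq : 0 < q) :
    ¬ IsSquare ((a ^ 2 - 1) * q ^ 2) := by
  rintro ⟨r, hr⟩
  obtain ⟨s, rfl⟩ : q ∣ r := (Int.pow_dvd_pow_iff two_ne_zero).1
    ⟨a ^ 2 - 1, by rw [sq r, ← hr, mul_comm]⟩
  have hs : a ^ 2 - 1 = s ^ 2 := mul_right_cancel₀ (pow_ne_zero 2 hq.ne') (by linarith)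
  have upper : |s| < a := abs_lt_of_sq_lt_sq (by linarith) (by linarith)
  have lower : a - 1 < |s| := by
    rw [← abs_of_nonneg (sub_nonneg.2 ha.le)]
    exact sq_lt_sq.1 (by linarith)
  lia

theorem exists_isSquare_pellTriple {a k : ℕ} (a1 : 1 < a) (hk : 0 < k) :
    ∃ x y : ℤ, x ≠ 0 ∧ IsSquare (pellTriple (a : ℤ) k (yn a1 k : ℤ) x y) := by
  have ha : (1 : ℤ) < a := by exact_mod_cast a1
  obtain ⟨c, hc⟩ : ∃ c : ℤ, c = yn a1 k := ⟨_, rfl⟩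
  rw [← hc]
  have c_pos : 0 < c := by rw [hc]; exact_mod_cast hk.trans_le (yn_ge_n a1 k)
  obtain ⟨s, x, hsx, hx⟩ : ∃ s x : ℤ,
      s ^ 2 - (a ^ 2 - 1) * (c ^ 2 * pellSq (a : ℤ) c) ^ 2 * x ^ 2 = 1 ∧
      x ≠ 0 := by
    have D_pos := pellSq_pos ha c
    refine Pell.exists_of_not_isSquare ?_ (not_isSquare_sq_sub_one_mul_sq ha (by positivity))
    have : (0 : ℤ) < a ^ 2 - 1 := by nlinarith
    positivity
  have hF : pellF (a : ℤ) c x = s ^ 2 := by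
    rw [pellF, pellSq, pellE]
    linear_combination -hsx
  have G1 := one_lt_pellG ha c_pos.ne' hx
  obtain ⟨G, hG⟩ := Int.eq_ofNat_of_zero_le (zero_le_one.trans G1.le)
  rw [hG, Nat.one_lt_cast] at G1
  have yn_modEq_k : (yn G1 k : ℤ) ≡ k [ZMOD c] :=
    (yn_intModEq G1 k).of_dvd (hG ▸ pellG_modEq_one.symm.dvd)
  have yn_modEq_c : c ≡ yn G1 k [ZMOD pellF (a : ℤ) c x] := by
    obtain ⟨f, hf⟩ := Int.eq_ofNat_of_zero_le (pellSq_pos ha (pellE (a : ℤ) c x)).le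
    change pellF (a : ℤ) c x = f at hf
    have hGa : G ≡ a [MOD f] := Int.natCast_modEq_iff.1 (hf ▸ hG ▸ pellG_modEq_base)
    rw [hf, hc]
    exact Int.natCast_modEq_iff.2 (xy_modEq_of_modEq G1 a1 hGa k).2.symm
  obtain ⟨q, hq⟩ := yn_modEq_c.dvd
  obtain ⟨y, hy⟩ : (c : ℤ) ∣ q - k := by
    have hqk : pellF (a : ℤ) c x * q ≡ 1 * q [ZMOD c] := pellF_modEq_one.mul_right q
    rw [← hq, one_mul] at hqk
    have : yn G1 k - c ≡ yn G1 k [ZMOD c] := by simp [Int.ModEq]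
    exact (yn_modEq_k.symm.trans (this.symm.trans hqk)).dvd
  have hH : pellH (a : ℤ) k c x y = yn G1 k := by
    rw [pellH]
    linear_combination -hq - pellF (a : ℤ) c x * hy
  refine ⟨x, y, hx, xn a1 k * s * xn G1 k, ?_⟩
  rw [pellTriple, hH, hG, pellSq_yn, hF, hc, pellSq_yn]
  ring

/-! ### Approximating a central binomial coefficient by a quotient of Pell numbers -/

/-- The polynomial part of `(V + 1) ^ (2 * X) / V ^ X`; its constant term is the central binomial
coefficient. -/
def upperBinomSum (X V : ℕ) : ℕ := ∑ i ∈ Finset.range (X + 1), (2 * X).choose (X + i) * V ^ i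

theorem upperBinomSum_eq (X V : ℕ) : upperBinomSum X V =
    ∑ i ∈ Finset.range X, (2 * X).choose (X + (i + 1)) * V ^ (i + 1) + X.centralBinom := by
  simp only [upperBinomSum, Finset.sum_range_succ', Nat.centralBinom, add_zero, pow_zero, mul_one]

theorem upperBinomSum_pos (X V : ℕ) : 0 < upperBinomSum X V := by
  rw [upperBinomSum_eq]
  exact Nat.add_pos_right _ X.centralBinom_pos

theorem dvd_upperBinomSum_iff {X V Y : ℕ} (h : Y ∣ V) :
    Y ∣ upperBinomSum X V ↔ Y ∣ X.centralBinom := by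
  rw [upperBinomSum_eq]
  exact Nat.dvd_add_right <| Finset.dvd_sum fun i _ ↦
    (h.trans (dvd_pow_self V i.succ_ne_zero)).mul_left _

theorem add_one_pow_two_mul (X V : ℕ) : (V + 1) ^ (2 * X) =
    ∑ i ∈ Finset.range X, (2 * X).choose i * V ^ i + V ^ X * upperBinomSum X V := by
  rw [add_pow, show 2 * X + 1 = X + (X + 1) by ring, Finset.sum_range_add, upperBinomSum,
    Finset.mul_sum]
  congr 1 <;> refine Finset.sum_congr rfl fun i _ ↦ ?_ <;> simp only [one_pow, pow_add] <;>
    push_cast <;> ring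

theorem sum_range_choose_mul_pow_mul_le {X V : ℕ} (hV : 0 < V) :
    (∑ i ∈ Finset.range X, (2 * X).choose i * V ^ i) * V ≤ 4 ^ X * V ^ X := by
  calc (∑ i ∈ Finset.range X, (2 * X).choose i * V ^ i) * V
      = ∑ i ∈ Finset.range X, (2 * X).choose i * V ^ (i + 1) := by
        simp only [Finset.sum_mul, pow_succ, mul_assoc]
    _ ≤ ∑ i ∈ Finset.range X, (2 * X).choose i * V ^ X := by
        gcongr with i hi
        exact Finset.mem_range.1 hi
    _ ≤ ∑ i ∈ Finset.range (2 * X + 1), (2 * X).choose i * V ^ X := by gcongr; lia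
    _ = 4 ^ X * V ^ X := by rw [← Finset.sum_mul, Nat.sum_range_choose, pow_mul]; norm_num

theorem upperBinomSum_le_ratio {X V : ℕ} (hV : 0 < V) :
    (upperBinomSum X V : ℝ) ≤ (V + 1) ^ (2 * X) / V ^ X := by
  rw [le_div_iff₀ (by positivity), mul_comm]
  exact_mod_cast (add_one_pow_two_mul X V).symm ▸ Nat.le_add_left _ _

theorem ratio_le_upperBinomSum_add {X V : ℕ} (hV : 0 < V) :
    ((V : ℝ) + 1) ^ (2 * X) / V ^ X ≤ upperBinomSum X V + 4 ^ X / V := by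
  have hsum : (((V + 1) ^ (2 * X) : ℕ) : ℝ) = _ := congrArg _ (add_one_pow_two_mul X V)
  have hrem : ((_ : ℕ) : ℝ) ≤ _ := Nat.cast_le.2 (sum_range_choose_mul_pow_mul_le (X := X) hV)
  push_cast at hsum hrem
  rw [hsum, add_div, mul_div_cancel_left₀ _ (by positivity), add_comm]
  gcongr _ + ?_
  rwa [div_le_div_iff₀ (by positivity) (by positivity)]

theorem one_sub_div_mul_pow_le {a : ℝ} (ha : 1 ≤ a) (n : ℕ) :
    (1 - n / (2 * a)) * (2 * a) ^ n ≤ (2 * a - 1) ^ n := by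
  have inv_le : 1 / (2 * a) ≤ 1 := (div_le_one (by positivity)).2 (by linarith)
  have bernoulli := one_add_mul_le_pow (a := -(1 / (2 * a))) (by linarith) n
  calc (1 - n / (2 * a)) * (2 * a) ^ n = (1 + n * -(1 / (2 * a))) * (2 * a) ^ n := by ring
    _ ≤ (1 + -(1 / (2 * a))) ^ n * (2 * a) ^ n := by gcongr
    _ = (2 * a - 1) ^ n := by rw [← mul_pow]; congr 1; field_simp; ring

/-- An interval that contains the Pell number `yn a (n + 1)`. -/
def pellInterval (a : ℝ) (n : ℕ) : Set ℝ := Set.Icc ((2 * a - 1) ^ n) ((2 * a) ^ n)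

theorem yn_mem_pellInterval {a : ℕ} (a1 : 1 < a) (n : ℕ) :
    (yn a1 (n + 1) : ℝ) ∈ pellInterval a n :=
  ⟨by exact_mod_cast pow_le_yn_succ a1 n, by exact_mod_cast yn_succ_le_pow a1 n⟩

section Ratio

variable {X : ℕ} {u V C J : ℝ}

theorem abs_sub_mul_le_of_mem_pellInterval {a a' Z : ℝ} (ha : 1 ≤ a) (haa' : a ≤ a')
    (hX : X ≤ a) (hZ : 0 ≤ Z) (hpow : (2 * a) ^ (2 * X) = (2 * a') ^ X * Z)
    (hC : C ∈ pellInterval a (2 * X)) (hJ : J ∈ pellInterval a' X) :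
    |C - J * Z| ≤ J * Z * (X / a) := by
  have : 0 < a := by linarith
  have a'_pos : 0 < a' := by linarith
  have ratio_le_one : X / a ≤ 1 := (div_le_one (by positivity)).2 hX
  have lower : (1 - X / a) * (J * Z) ≤ C := by
    calc (1 - X / a) * (J * Z) ≤ (1 - X / a) * ((2 * a') ^ X * Z) := by
          gcongr
          exact hJ.2
      _ = (1 - (2 * X : ℕ) / (2 * a)) * (2 * a) ^ (2 * X) := by
          rw [hpow]; push_cast; rw [mul_div_mul_left _ _ two_ne_zero]
      _ ≤ C := (one_sub_div_mul_pow_le ha _).trans hC.1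
  have upper : C ≤ (1 + X / a) * (J * Z) := by
    have one_le : 1 ≤ (1 + X / a) * (1 - X / (2 * a')) := by
      have : (1 + X / a) * (1 - X / (2 * a')) = 1 + X * (2 * a' - a - X) / (2 * a * a') := by
        field_simp
        ring
      rw [this, le_add_iff_nonneg_right]
      exact div_nonneg (mul_nonneg (by positivity) (by linarith)) (by nlinarith)
    calc C ≤ (2 * a') ^ X * Z := hpow ▸ hC.2
      _ ≤ (1 + X / a) * (1 - X / (2 * a')) * (2 * a') ^ X * Z := by
          gcongr
          exact le_mul_of_one_le_left (by positivity) one_le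
      _ ≤ (1 + X / a) * (J * Z) := by
          rw [mul_assoc (1 + X / a), mul_assoc (1 + X / a)]
          gcongr
          exact (one_sub_div_mul_pow_le (ha.trans haa') X).trans hJ.1
  exact abs_le.2 ⟨by linarith, by linarith⟩

-- The bases are chosen so that `(2a)² / (2a') = (V + 1)² / V`, whatever `u` is.
theorem abs_sub_mul_ratio_le (hu : 1 ≤ u) (hV : 1 ≤ V) (hX : X ≤ u * (V + 1))
    (hC : C ∈ pellInterval (u * (V + 1)) (2 * X))
    (hJ : J ∈ pellInterval (2 * u ^ 2 * V) X) :
    |C - J * ((V + 1) ^ (2 * X) / V ^ X)| ≤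
      J * ((V + 1) ^ (2 * X) / V ^ X) * (X / (u * (V + 1))) := by
  have : V ≤ u * V := le_mul_of_one_le_left (by linarith) hu
  refine abs_sub_mul_le_of_mem_pellInterval (by nlinarith) (by nlinarith) hX (by positivity) ?_
    hC hJ
  rw [mul_div_assoc', eq_div_iff (by positivity), pow_mul, pow_mul, ← mul_pow, ← mul_pow]
  ring

theorem mul_abs_sub_mul_ratio_le {L : ℝ} (hL : 1 ≤ L) (hX : 1 ≤ X) (hLu : 16 * (L * X) ≤ u)
    (hV : 1 ≤ V) (hC : C ∈ pellInterval (u * (V + 1)) (2 * X))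
    (hJ : J ∈ pellInterval (2 * u ^ 2 * V) X) :
    L * |C - J * ((V + 1) ^ (2 * X) / V ^ X)| ≤
      J * ((V + 1) ^ (2 * X) / V ^ X) / (16 * V) := by
  have hX' : (1 : ℝ) ≤ X := by exact_mod_cast hX
  have hLX : X ≤ L * X := le_mul_of_one_le_left (by positivity) hL
  have hu : 1 ≤ u := by linarith
  have J_pos : 0 ≤ J := by
    refine le_trans ?_ hJ.1
    have : 1 ≤ u ^ 2 * V := by nlinarith [one_le_pow₀ hu (n := 2)]
    exact pow_nonneg (by linarith) X
  have ratio_le : L * (X / (u * (V + 1))) ≤ 1 / (16 * V) := by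
    rw [mul_div_assoc', div_le_div_iff₀ (by positivity) (by positivity)]
    nlinarith
  have key := abs_sub_mul_ratio_le hu hV (by nlinarith) hC hJ
  calc L * |C - J * ((V + 1) ^ (2 * X) / V ^ X)|
      ≤ L * (J * ((V + 1) ^ (2 * X) / V ^ X) * (X / (u * (V + 1)))) := by gcongr
    _ = J * ((V + 1) ^ (2 * X) / V ^ X) * (L * (X / (u * (V + 1)))) := by ring
    _ ≤ J * ((V + 1) ^ (2 * X) / V ^ X) * (1 / (16 * V)) := by gcongr
    _ = J * ((V + 1) ^ (2 * X) / V ^ X) / (16 * V) := by ring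

end Ratio

section RatioNat

variable {X u V : ℕ} {C J : ℝ}

theorem mul_abs_sub_upperBinomSum_mul_le {μ : ℝ} (hμ : 1 ≤ μ) (hX : 1 ≤ X)
    (hNu : 16 * (upperBinomSum X V * X) ≤ u) (hV : 64 * (μ * 4 ^ X) ≤ V)
    (hC : C ∈ pellInterval (u * (V + 1)) (2 * X))
    (hJ : J ∈ pellInterval (2 * u ^ 2 * V) X)
    (hJ0 : 0 ≤ J) : 32 * μ * |C - upperBinomSum X V * J| ≤ J := by
  set Z := ((V : ℝ) + 1) ^ (2 * X) / V ^ X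
  have hN1 : (1 : ℝ) ≤ upperBinomSum X V := by exact_mod_cast upperBinomSum_pos X V
  have hNu' : 16 * ((upperBinomSum X V : ℝ) * X) ≤ u := by exact_mod_cast hNu
  have hV' : 64 * μ ≤ V := by
    have : (1 : ℝ) ≤ 4 ^ X := one_le_pow₀ (by norm_num)
    nlinarith
  have V_pos : 0 < V := by
    have : (0 : ℝ) < V := by linarith
    exact_mod_cast this
  have Z_ge : upperBinomSum X V ≤ Z := upperBinomSum_le_ratio V_pos
  have Z_le : Z ≤ upperBinomSum X V + 4 ^ X / V := ratio_le_upperBinomSum_add V_pos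
  have rem_le : (4 : ℝ) ^ X / V * (64 * μ) ≤ 1 := by
    rw [div_mul_eq_mul_div, div_le_one (by positivity)]
    linarith
  set N : ℝ := (upperBinomSum X V : ℝ)
  have approx : N * |C - J * Z| ≤ J * Z / (16 * V) :=
    mul_abs_sub_mul_ratio_le hN1 hX hNu' (by linarith) hC hJ
  have first : 64 * μ * |C - J * Z| ≤ J := by
    have rem_nonneg : (0 : ℝ) ≤ 4 ^ X / V := by positivity
    have Z_le_two_mul : Z ≤ 2 * N := by nlinarith
    rw [le_div_iff₀ (by positivity)] at approx
    have : N * (16 * V * |C - J * Z|) ≤ N * (2 * J) := by nlinarith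
    nlinarith [le_of_mul_le_mul_left this (by linarith), abs_nonneg (C - J * Z)]
  have second : 64 * μ * |J * Z - N * J| ≤ J := by
    rw [mul_comm N, ← mul_sub, abs_mul, abs_of_nonneg hJ0, abs_of_nonneg (by linarith)]
    calc 64 * μ * (J * (Z - N)) = J * ((Z - N) * (64 * μ)) := by ring
      _ ≤ J * (4 ^ X / V * (64 * μ)) := by gcongr; linarith
      _ ≤ J := mul_le_of_le_one_right hJ0 rem_le
  have := abs_sub_le C (J * Z) (N * J)
  nlinarith

theorem eq_upperBinomSum_of_abs_sub_mul_lt {L : ℤ} (hL : 1 ≤ L) (hX : 1 ≤ X)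
    (hLu : 16 * (L * X) ≤ u) (hV : 64 * 4 ^ X ≤ V)
    (hC : C ∈ pellInterval (u * (V + 1)) (2 * X))
    (hJ : J ∈ pellInterval (2 * u ^ 2 * V) X)
    (h : 4 * |C - L * J| < J) : L = upperBinomSum X V := by
  set Z := ((V : ℝ) + 1) ^ (2 * X) / V ^ X with hZ
  have hL' : (1 : ℝ) ≤ L := by exact_mod_cast hL
  have hJ0 : 0 < J := by linarith [abs_nonneg (C - L * J)]
  have hV64 : (64 : ℝ) ≤ V := by exact_mod_cast (by grind [Nat.one_le_pow X 4] : 64 ≤ V)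
  have V_pos : 0 < V := by exact_mod_cast (by linarith : (0 : ℝ) < V)
  have Z_ge : upperBinomSum X V ≤ Z := upperBinomSum_le_ratio V_pos
  have Z_le : Z ≤ upperBinomSum X V + 4 ^ X / V := ratio_le_upperBinomSum_add V_pos
  have Z_nonneg : 0 ≤ Z := by positivity
  have rem_le : (4 : ℝ) ^ X / V ≤ 1 / 64 := by
    rw [div_le_div_iff₀ (by positivity) (by norm_num)]
    have : (64 : ℝ) * 4 ^ X ≤ V := by exact_mod_cast hV
    linarith
  have approx : L * |C - J * Z| ≤ J * Z / (16 * V) :=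
    mul_abs_sub_mul_ratio_le hL' hX (by exact_mod_cast hLu) (by linarith) hC hJ
  have close : L * |Z - L| ≤ L / 4 + Z / 1024 := by
    have tri := abs_sub_le (J * Z) C (L * J)
    rw [abs_sub_comm (J * Z) C, mul_comm (L : ℝ) J, ← mul_sub, abs_mul, abs_of_pos hJ0] at tri
    have h1024 : J * Z / (16 * V) ≤ J * Z / 1024 := by gcongr; linarith
    refine le_of_mul_le_mul_left (a := J) ?_ hJ0
    rw [mul_comm (L : ℝ) J] at h
    nlinarith
  have Z_le_two_mul : Z ≤ 2 * L := by nlinarith [le_abs_self (Z - L)]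
  have near : |Z - L| ≤ 1 / 4 + 1 / 512 := le_of_mul_le_mul_left (a := (L : ℝ)) (by linarith)
    (by linarith)
  have : |(L : ℝ) - upperBinomSum X V| < 1 := by
    rw [abs_le] at near
    rw [abs_lt]
    constructor <;> linarith
  exact sub_eq_zero.1 (Int.abs_lt_one_iff.1 (by exact_mod_cast this))

end RatioNat

/-! ### Characterizing powers of two -/

theorem dvd_two_pow_congr {a : ℕ} (a1 : 1 < a) (n : ℕ) :
    4 * (a : ℤ) - 5 ∣ (2 ^ n) ^ 2 - 1 + 2 * 2 ^ n * yn a1 n * (a - 2) := by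
  obtain ⟨q, hq⟩ := x_sub_y_dvd_pow a1 2 n
  have hpell := pellSq_yn a1 n
  simp only [xz, yz, pellSq] at hq hpell
  push_cast at hq
  refine ⟨(yn a1 n) ^ 2 + q * (xn a1 n + (yn a1 n * (a - 2) + 2 ^ n)), ?_⟩
  linear_combination (xn a1 n + (yn a1 n * ((a : ℤ) - 2) + 2 ^ n)) * hq - hpell

theorem eq_two_pow_of_dvd {a : ℕ} (a1 : 1 < a) {n : ℕ} {W : ℤ} (hW : 0 ≤ W)
    (h : 4 * (a : ℤ) - 5 ∣ W ^ 2 - 1 + 2 * W * yn a1 n * (a - 2))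
    (hlt : (W + 2 ^ n) * (2 ^ n * W + 1) < 4 * (a : ℤ) - 5) : W = 2 ^ n := by
  have dvd_mul : 4 * (a : ℤ) - 5 ∣ (W - 2 ^ n) * (2 ^ n * W + 1) := by
    obtain ⟨q, hq⟩ := h
    obtain ⟨r, hr⟩ := dvd_two_pow_congr a1 n
    exact ⟨2 ^ n * q - W * r, by linear_combination 2 ^ n * hq - W * hr⟩
  have eq_zero := Int.eq_zero_of_abs_lt_dvd dvd_mul <| by
    rw [abs_mul, abs_of_nonneg (by positivity : 0 ≤ 2 ^ n * W + 1)]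
    refine lt_of_le_of_lt ?_ hlt
    gcongr
    rw [abs_le]
    constructor <;> linarith [pow_pos (zero_lt_two (α := ℤ)) n]
  exact sub_eq_zero.1 ((mul_eq_zero.1 eq_zero).resolve_right (by positivity))

/-! ### Encoding divisibility of a central binomial coefficient -/

theorem eq_yn_of_isSquare_pellSq {a k N : ℕ} (a1 : 1 < a) (hk : 0 < k) (hN : N + k + 1 < a)
    {J : ℤ} (hJ : J ≡ k [ZMOD a - 1]) (hlt : |J| < (2 * a - 1) ^ N)
    (h : IsSquare (pellSq (a : ℤ) J)) : J = yn a1 k := by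
  obtain ⟨n, hn, -⟩ := exists_abs_eq_yn a1 h
  have n_le : n ≤ N := by
    by_contra! hlt'
    obtain ⟨m, rfl⟩ := Nat.exists_eq_add_of_lt hlt'
    have : (2 * (a : ℤ) - 1) ^ N ≤ (2 * a - 1) ^ (N + m) :=
      pow_le_pow_right₀ (by lia) (Nat.le_add_right N m)
    have := pow_le_yn_succ a1 (N + m)
    lia
  have n_modEq : |J| ≡ n [ZMOD a - 1] := hn ▸ yn_intModEq a1 n
  rcases abs_choice J with habs | habs
  · rw [habs] at n_modEq hn
    have := Int.eq_zero_of_abs_lt_dvd (hJ.symm.trans n_modEq).dvd (by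
      rw [abs_lt]; constructor <;> lia)
    rw [hn, show n = k by lia]
  · rw [habs] at n_modEq
    have := Int.eq_zero_of_abs_lt_dvd (hJ.neg.symm.trans n_modEq).dvd (by
      rw [abs_lt]; constructor <;> lia)
    lia

/-- The quantities in the Diophantine definition of the relation that `b` is a power of two and
`Y` divides the central binomial coefficient of `X`. Given `X`, `Y`, the bound `μ` of `g`, and `b`,
the other fields are the unknowns. -/
structure Bridge (R : Type*) where
  X : R
  Y : R
  b : R
  μ : R
  g : R
  h : R
  k : R
  l : R
  w : R
  x : R
  y : R

namespace Bridge

section CommRing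

variable {R : Type*} [CommRing R] (p : Bridge R)

/-- The multiple `V` of `Y` for which `(V + 1) ^ (2 * X) / V ^ X` is evaluated modulo `Y`. -/
def V : R := 64 * p.Y * p.μ ^ 2 * (p.w ^ 2 + 1)

/-- The scaling factor `U`, large enough to make the quotient of Pell numbers precise. -/
def U : R := 16 * p.l ^ 2 * p.X ^ 2 * p.Y ^ 2

/-- The Pell base of the numerator. -/
def A : R := p.U * (p.V + 1)

/-- The Pell base of the denominator. -/
def B : R := 2 * p.U ^ 2 * p.V

/-- The numerator, to be the Pell number of base `A` and index `2X + 1`. -/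
def C : R := 2 * p.X + 1 + (p.A - 1) * p.h

/-- The denominator, to be the Pell number of base `B` and index `X + 1`. -/
def J : R := p.X + 1 + (p.B - 1) * p.k

/-- The expression that is a square when `C` is a Pell number. -/
def P₁ : R := pellTriple p.A (2 * p.X + 1) p.C p.x p.y

/-- The expression that is a square when `J` is a Pell number. -/
def P₂ : R := pellSq p.B p.J

/-- The divisor `4A - 5` of the congruence that forces `2bw²` to be a power of two. -/
def S : R := 4 * p.A - 5

/-- The dividend of the congruence that forces `2bw²` to be a power of two. -/
def T : R :=
  (2 * p.b * p.w ^ 2) ^ 2 - 1 + 2 * (2 * p.b * p.w ^ 2) * p.C * (p.A - 2)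

/-- An expression whose positivity says that `x` and `l` are nonzero, that `C / J` is close to
`l * Y` and that `0 ≤ g < μ`. -/
def Q : R :=
  p.x ^ 2 * p.l ^ 2 * (p.J ^ 2 * p.μ ^ 2 - 16 * p.μ ^ 2 * (p.C - p.l * p.Y * p.J) ^ 2
    - p.J ^ 2 * (2 * p.g + 1 - p.μ) ^ 2)

end CommRing

/-- The system of conditions on integers to which the relation is reduced. -/
structure IsSolution (p : Bridge ℤ) : Prop where
  isSquare_P₁ : IsSquare p.P₁
  isSquare_P₂ : IsSquare p.P₂
  S_dvd_T : p.S ∣ p.T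
  Q_pos : 0 < p.Q

section Back

variable {p : Bridge ℤ}

theorem U_eq (p : Bridge ℤ) : p.U = 16 * (p.l * p.Y * p.X) ^ 2 := by
  rw [U]
  ring

theorem sixteen_mul_le_U (hX : 0 < p.X) (hY : 0 < p.Y) (hl : 0 < p.l) :
    16 * (p.l * p.Y * p.X) ≤ p.U := by
  rw [U_eq]
  have : 0 < p.l * p.Y * p.X := by positivity
  nlinarith

theorem sixteen_mul_X_le_U (hX : 0 < p.X) (hY : 0 < p.Y) (hl : p.l ≠ 0) : 16 * p.X ≤ p.U := by
  have one_le : 1 ≤ |p.l * p.Y| := Int.one_le_abs (by positivity)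
  calc 16 * p.X ≤ 16 * (|p.l * p.Y| * p.X) := by
        gcongr
        exact le_mul_of_one_le_left hX.le one_le
    _ ≤ 16 * (|p.l * p.Y| * p.X) ^ 2 := by
        gcongr
        exact Int.le_self_sq _
    _ = p.U := by
        rw [U_eq, mul_pow, sq_abs, ← mul_pow]

theorem mul_sixtyfour_le_V (hY : 0 < p.Y) (hμ : 0 < p.μ) (hb : p.b ≤ p.μ) :
    64 * (p.b * p.w ^ 2) ≤ p.V := by
  have : 0 < p.Y * p.μ := by positivity
  have : p.b ≤ p.Y * p.μ * p.μ := by nlinarith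
  rw [V]
  nlinarith [sq_nonneg p.w]

theorem sixtyfour_le_V (hY : 0 < p.Y) (hμ : 0 < p.μ) : 64 ≤ p.V := by
  have : 0 < p.Y * p.μ ^ 2 := by positivity
  have : 0 < p.Y * p.μ ^ 2 * (p.w ^ 2 + 1) := by positivity
  rw [V]
  lia

theorem A_lt_B (hU : 16 ≤ p.U) (hV : 64 ≤ p.V) : p.A < p.B := by
  rw [A, B]
  nlinarith [mul_le_mul hU hV (by norm_num) (by lia)]

theorem U_mul_V_lt_A (hU : 0 < p.U) : p.U * p.V < p.A := by
  rw [A]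
  lia

theorem C_modEq (p : Bridge ℤ) : p.C ≡ 2 * p.X + 1 [ZMOD p.A - 1] := by
  simp [C, Int.ModEq]

theorem J_modEq (p : Bridge ℤ) : p.J ≡ p.X + 1 [ZMOD p.B - 1] := by
  simp [J, Int.ModEq]

theorem ne_zero_of_Q_pos (h : 0 < p.Q) : p.l ≠ 0 ∧ p.x ≠ 0 := by
  constructor <;> intro h0 <;> simp [Q, h0] at h

theorem four_mul_abs_lt_of_Q_pos (h : 0 < p.Q) :
    4 * |p.C - p.l * p.Y * p.J| < |p.J| := by
  have hpos := pos_of_mul_pos_right (Q.eq_1 p ▸ h) (by positivity)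
  have : 16 * (p.C - p.l * p.Y * p.J) ^ 2 < p.J ^ 2 :=
    lt_of_mul_lt_mul_right (a := p.μ ^ 2)
      (by linarith [sq_nonneg (p.J * (2 * p.g + 1 - p.μ))]) (sq_nonneg _)
  rw [← abs_of_pos (zero_lt_four (α := ℤ)), ← abs_mul, ← sq_lt_sq]
  linarith

theorem mem_Ico_of_Q_pos (hμ : 0 < p.μ) (h : 0 < p.Q) : p.g ∈ Set.Ico 0 p.μ := by
  have hpos := pos_of_mul_pos_right (Q.eq_1 p ▸ h) (by positivity)
  have : (2 * p.g + 1 - p.μ) ^ 2 < p.μ ^ 2 :=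
    lt_of_mul_lt_mul_left (a := p.J ^ 2)
      (by linarith [sq_nonneg (p.μ * (p.C - p.l * p.Y * p.J))]) (sq_nonneg _)
  have := abs_lt_of_sq_lt_sq' this hμ.le
  constructor <;> lia

theorem Q_pos_of_mul_abs_le (hμ : 0 < p.μ) (hg : p.g ∈ Set.Ico 0 p.μ) (hl : p.l ≠ 0) (hx : p.x ≠ 0)
    (hJ : 0 < p.J) (h : 32 * p.μ * |p.C - p.l * p.Y * p.J| ≤ p.J) : 0 < p.Q := by
  have close : (32 * p.μ * (p.C - p.l * p.Y * p.J)) ^ 2 ≤ p.J ^ 2 := by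
    rw [sq_le_sq, abs_mul, abs_of_pos (by positivity), abs_of_pos hJ]
    exact h
  have gap : 1 ≤ p.μ ^ 2 - (2 * p.g + 1 - p.μ) ^ 2 := by
    obtain ⟨hg0, hgμ⟩ := hg
    nlinarith
  have : p.J ^ 2 * 1 ≤ p.J ^ 2 * (p.μ ^ 2 - (2 * p.g + 1 - p.μ) ^ 2) := by gcongr
  have : 0 < p.J ^ 2 := by positivity
  rw [Q]
  apply mul_pos (by positivity)
  linarith

theorem mul_V_pow_le {X a b : ℕ} (a1 : 1 < a) (b1 : 1 < b) (ha : p.A = a) (hb : p.B = b)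
    (hU : 0 < p.U) (hV : 0 < p.V) :
    (yn b1 (X + 1) : ℤ) * p.V ^ X ≤ yn a1 (2 * X + 1) := by
  have hUV := ha ▸ U_mul_V_lt_A hU
  calc (yn b1 (X + 1) : ℤ) * p.V ^ X ≤ (2 * b) ^ X * p.V ^ X := by
        gcongr
        exact yn_succ_le_pow b1 X
    _ = (2 * (p.U * p.V)) ^ (2 * X) := by
        rw [← hb, B, pow_mul, ← mul_pow]
        ring
    _ ≤ (2 * a - 1) ^ (2 * X) := by
        gcongr
        lia
    _ ≤ yn a1 (2 * X + 1) := pow_le_yn_succ a1 (2 * X)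

theorem C_eq_yn {X a : ℕ} (a1 : 1 < a) (hX : p.X = X) (hX0 : 0 < X) (ha : p.A = a)
    (hlarge : 1024 * p.X < p.A) (hx : p.x ≠ 0) (h : IsSquare p.P₁) :
    p.C = yn a1 (2 * X + 1) := by
  have hmod := p.C_modEq
  rw [ha, hX] at hmod
  rw [P₁, ha, hX] at h
  exact eq_yn_of_isSquare_pellTriple a1 (by lia) (by lia) hx (by exact_mod_cast hmod)
    (by exact_mod_cast h)

theorem abs_J_lt (hY : 0 < p.Y) (hl : p.l ≠ 0) (hC : 0 < p.C)
    (hclose : 4 * |p.C - p.l * p.Y * p.J| < |p.J|) : |p.J| < 2 * p.C := by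
  have : |p.J| ≤ |p.l * p.Y * p.J| := by
    rw [abs_mul]
    exact le_mul_of_one_le_left (abs_nonneg _) (Int.one_le_abs (by positivity))
  have := abs_sub_abs_le_abs_sub (p.l * p.Y * p.J) p.C
  rw [abs_sub_comm, abs_of_pos hC] at this
  lia

theorem J_eq_yn {X a b : ℕ} (a1 : 1 < a) (b1 : 1 < b) (hX : p.X = X) (hb : p.B = b) (hab : a < b)
    (hlarge : 1024 * p.X < p.B) (hX0 : 0 < X) (hJ : |p.J| < 2 * yn a1 (2 * X + 1))
    (h : IsSquare p.P₂) : p.J = yn b1 (X + 1) := by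
  have hmod := p.J_modEq
  rw [hb, hX] at hmod
  rw [P₂, hb] at h
  refine eq_yn_of_isSquare_pellSq (N := 2 * X + 1) b1 X.succ_pos (by lia) (by exact_mod_cast hmod)
    ?_ h
  calc |p.J| < 2 * yn a1 (2 * X + 1) := hJ
    _ ≤ (2 * a) * (2 * a) ^ (2 * X) := by
        gcongr
        · lia
        · exact yn_succ_le_pow a1 (2 * X)
    _ = (2 * a) ^ (2 * X + 1) := by ring
    _ ≤ (2 * b - 1) ^ (2 * X + 1) := by
        gcongr
        lia

theorem l_pos (hY : 0 < p.Y) (hl : p.l ≠ 0) (hC : 0 < p.C) (hJ : 0 < p.J)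
    (hclose : 4 * |p.C - p.l * p.Y * p.J| < p.J) : 0 < p.l := by
  by_contra! hle
  have : p.l * p.Y ≤ -1 := by nlinarith [lt_of_le_of_ne hle hl]
  have := le_abs_self (p.C - p.l * p.Y * p.J)
  nlinarith

theorem V_pow_le {X : ℕ} (hY : 0 < p.Y) (hl : 0 < p.l) (hJ : 0 < p.J)
    (hclose : 4 * |p.C - p.l * p.Y * p.J| < p.J) (hVC : p.J * p.V ^ X ≤ p.C) :
    p.V ^ X ≤ 2 * (p.l * p.Y) := by
  have := le_abs_self (p.C - p.l * p.Y * p.J)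
  have : 0 < p.l * p.Y := by positivity
  exact le_of_mul_le_mul_left (a := p.J) (by nlinarith) hJ

theorem mul_lt_S {W : ℤ} {X : ℕ} (hX : p.X = X) (hX0 : 0 < X) (hl : 0 < p.l) (hY : 0 < p.Y)
    (hW : W ∈ Set.Icc 0 p.V) (hV : 64 ≤ p.V) (hVX : p.V ^ X ≤ 2 * (p.l * p.Y)) :
    (W + 2 ^ (2 * X + 1)) * (2 ^ (2 * X + 1) * W + 1) < p.S := by
  obtain ⟨P, hP⟩ : ∃ P : ℤ, P = 2 ^ (2 * X + 1) := ⟨_, rfl⟩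
  rw [← hP]
  have P_ge : 2 ≤ P := hP ▸ le_self_pow₀ (by norm_num) (by lia)
  have P_sq_le : P ^ 2 ≤ 4 * p.V ^ X := by
    calc P ^ 2 = 4 * 16 ^ X := by
          rw [hP, ← pow_mul, show (2 * X + 1) * 2 = 4 * X + 2 by ring, pow_add, pow_mul]
          norm_num
          ring
      _ ≤ 4 * p.V ^ X := by
          gcongr
          lia
  have V_le_pow : p.V ≤ p.V ^ X := le_self_pow₀ (by lia) hX0.ne'
  have U_ge : 4 * (p.V ^ X * p.V ^ X) ≤ p.U := by
    have : (p.l * p.Y) ^ 2 ≤ (p.l * p.Y * X) ^ 2 := by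
      refine pow_le_pow_left₀ (by positivity) ?_ 2
      exact le_mul_of_one_le_right (by positivity) (by exact_mod_cast hX0)
    rw [U_eq, hX]
    nlinarith [mul_le_mul hVX hVX (by positivity) (by positivity)]
  have hUV := U_mul_V_lt_A (p := p) (by nlinarith [pow_pos (by lia : 0 < p.V) X])
  calc (W + P) * (P * W + 1) ≤ (p.V + P) * (P * p.V + 1) := by
        obtain ⟨hW0, hWV⟩ := hW
        gcongr
    _ ≤ (P * p.V) * (2 * (P * p.V)) := by
        gcongr <;> nlinarith
    _ = 2 * P ^ 2 * p.V * p.V := by ring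
    _ ≤ 2 * (4 * p.V ^ X) * p.V ^ X * p.V := by gcongr
    _ ≤ 2 * p.U * p.V := by nlinarith
    _ < p.S := by
        rw [S]
        nlinarith

namespace IsSolution

theorem exists_eq_yn {X : ℕ} (hs : p.IsSolution) (hX : p.X = X) (hX0 : 0 < X) (hY : 0 < p.Y)
    (hμ : 0 < p.μ) :
    ∃ (a b : ℕ) (a1 : 1 < a) (b1 : 1 < b), p.A = a ∧ p.B = b ∧
      p.C = yn a1 (2 * X + 1) ∧ p.J = yn b1 (X + 1) := by
  obtain ⟨hl, hx⟩ := ne_zero_of_Q_pos hs.Q_pos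
  have hU := sixteen_mul_X_le_U (by lia) hY hl
  have hV := sixtyfour_le_V hY hμ
  have hUV := U_mul_V_lt_A (p := p) (by lia)
  have hlarge : 1024 * p.X < p.A := by nlinarith
  have hAB := A_lt_B (p := p) (by lia) hV
  obtain ⟨a, ha⟩ := Int.eq_ofNat_of_zero_le (show 0 ≤ p.A by lia)
  obtain ⟨b, hb⟩ := Int.eq_ofNat_of_zero_le (show 0 ≤ p.B by lia)
  have a1 : 1 < a := by lia
  have b1 : 1 < b := by lia
  have hC := C_eq_yn a1 hX hX0 ha hlarge hx hs.isSquare_P₁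
  have C_pos : 0 < p.C := by
    rw [hC]
    exact_mod_cast strictMono_y a1 (2 * X).succ_pos
  have hJlt := abs_J_lt hY hl C_pos (four_mul_abs_lt_of_Q_pos hs.Q_pos)
  exact ⟨a, b, a1, b1, ha, hb, hC,
    J_eq_yn a1 b1 hX hb (by lia) (by lia) hX0 (hC ▸ hJlt) hs.isSquare_P₂⟩

theorem l_pos_and_V_pow_le {X : ℕ} (hs : p.IsSolution) (hX : p.X = X) (hX0 : 0 < X) (hY : 0 < p.Y)
    (hμ : 0 < p.μ) : 0 < p.l ∧ p.V ^ X ≤ 2 * (p.l * p.Y) := by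
  obtain ⟨a, b, a1, b1, ha, hb, hC, hJ⟩ := hs.exists_eq_yn hX hX0 hY hμ
  obtain ⟨hl, -⟩ := ne_zero_of_Q_pos hs.Q_pos
  have hU := sixteen_mul_X_le_U (by lia) hY hl
  have hV := sixtyfour_le_V hY hμ
  have C_pos : 0 < p.C := by
    rw [hC]
    exact_mod_cast strictMono_y a1 (2 * X).succ_pos
  have J_pos : 0 < p.J := by
    rw [hJ]
    exact_mod_cast strictMono_y b1 X.succ_pos
  have hclose := four_mul_abs_lt_of_Q_pos hs.Q_pos
  rw [abs_of_pos J_pos] at hclose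
  have hl := l_pos hY hl C_pos J_pos hclose
  refine ⟨hl, V_pow_le hY hl J_pos hclose ?_⟩
  rw [hC, hJ]
  exact mul_V_pow_le a1 b1 ha hb (by lia) (by lia)

theorem b_mul_w_sq {X : ℕ} (hs : p.IsSolution) (hX : p.X = X) (hX0 : 0 < X) (hY : 0 < p.Y)
    (hb : 0 < p.b) (hbμ : p.b ≤ p.μ) : p.b * p.w ^ 2 = 4 ^ X := by
  have hμ := hb.trans_le hbμ
  obtain ⟨a, -, a1, -, ha, -, hC, -⟩ := hs.exists_eq_yn hX hX0 hY hμ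
  obtain ⟨hl, hVX⟩ := hs.l_pos_and_V_pow_le hX hX0 hY hμ
  have hV := sixtyfour_le_V hY hμ
  have hbw := mul_sixtyfour_le_V hY hμ hbμ
  have hbw0 : 0 ≤ p.b * p.w ^ 2 := by positivity
  have hdvd := hs.S_dvd_T
  have hlt := mul_lt_S (W := 2 * p.b * p.w ^ 2) hX hX0 hl hY
    (Set.mem_Icc.2 ⟨by lia, by lia⟩) hV hVX
  rw [S, T, ha, hC] at hdvd
  rw [S, ha] at hlt
  have := eq_two_pow_of_dvd a1 (by lia) hdvd hlt
  rw [pow_succ _ (2 * X), pow_mul _ 2 X] at this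
  lia

theorem l_mul_Y_eq {X V : ℕ} (hs : p.IsSolution) (hX : p.X = X) (hX0 : 0 < X) (hY : 0 < p.Y)
    (hμ : 0 < p.μ) (hV : p.V = V) (hVX : 64 * 4 ^ X ≤ V) :
    p.l * p.Y = upperBinomSum X V := by
  obtain ⟨a, b, a1, b1, ha, hb, hC, hJ⟩ := hs.exists_eq_yn hX hX0 hY hμ
  obtain ⟨hl, -⟩ := hs.l_pos_and_V_pow_le hX hX0 hY hμ
  have hU := sixteen_mul_le_U (hX ▸ by exact_mod_cast hX0) hY hl
  have hlY : 0 < p.l * p.Y := by positivity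
  have hU0 : 0 ≤ p.U := by
    rw [U_eq]
    positivity
  obtain ⟨u, hu⟩ := Int.eq_ofNat_of_zero_le hU0
  obtain rfl : a = u * (V + 1) := by
    zify
    rw [← ha, A, hu, hV]
  obtain rfl : b = 2 * u ^ 2 * V := by
    zify
    rw [← hb, B, hu, hV]
  have C_mem := yn_mem_pellInterval a1 (2 * X)
  have J_mem := yn_mem_pellInterval b1 X
  have hclose := four_mul_abs_lt_of_Q_pos hs.Q_pos
  rw [hC, hJ, Nat.abs_cast] at hclose
  push_cast at C_mem J_mem
  rw [hX, hu] at hU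
  exact eq_upperBinomSum_of_abs_sub_mul_lt hlY hX0 hU hVX C_mem J_mem (by exact_mod_cast hclose)

theorem dvd_centralBinom {X : ℕ} (hs : p.IsSolution) (hX : p.X = X) (hX0 : 0 < X) (hY : 0 < p.Y)
    (hb : 0 < p.b) (hbμ : p.b ≤ p.μ) : p.Y ∣ X.centralBinom := by
  have hμ := hb.trans_le hbμ
  have hVbw := mul_sixtyfour_le_V hY hμ hbμ
  have hbw := hs.b_mul_w_sq hX hX0 hY hb hbμ
  have hV := sixtyfour_le_V hY hμ
  obtain ⟨V, hVV⟩ := Int.eq_ofNat_of_zero_le (show 0 ≤ p.V by lia)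
  obtain ⟨Y, hYY⟩ := Int.eq_ofNat_of_zero_le hY.le
  have hVX : 64 * 4 ^ X ≤ V := by
    zify
    lia
  have hYV : Y ∣ V := by
    zify
    rw [← hYY, ← hVV, Bridge.V]
    exact ⟨64 * p.μ ^ 2 * (p.w ^ 2 + 1), by ring⟩
  have hdvd : p.Y ∣ upperBinomSum X V := ⟨p.l, by rw [← hs.l_mul_Y_eq hX hX0 hY hμ hVV hVX]; ring⟩
  rw [hYY] at hdvd ⊢
  exact_mod_cast (dvd_upperBinomSum_iff hYV).1 (by exact_mod_cast hdvd)

theorem b_eq_two_pow {X : ℕ} (hs : p.IsSolution) (hX : p.X = X) (hX0 : 0 < X) (hY : 0 < p.Y)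
    (hb : 0 < p.b) (hbμ : p.b ≤ p.μ) : ∃ i, p.b = 2 ^ i := by
  have hbw := hs.b_mul_w_sq hX hX0 hY hb hbμ
  obtain ⟨b, hbb⟩ := Int.eq_ofNat_of_zero_le hb.le
  have hdvd : p.b ∣ 2 ^ (2 * X) := ⟨p.w ^ 2, by rw [pow_mul, hbw]; norm_num⟩
  rw [hbb] at hdvd ⊢
  obtain ⟨i, -, hi⟩ := (Nat.dvd_prime_pow Nat.prime_two).1 (by exact_mod_cast hdvd)
  exact ⟨i, by exact_mod_cast hi⟩

end IsSolution

end Back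

theorem exists_isSolution_of_forall_mem_pellInterval (p : Bridge ℤ) {X : ℕ} (hX : p.X = X)
    (hA : 1 < p.A) (hB : 1 < p.B) (hμ : 0 < p.μ) (hg : p.g ∈ Set.Ico 0 p.μ)
    (hl : p.l ≠ 0) (hw : p.b * p.w ^ 2 = 4 ^ X)
    (hclose : ∀ C J : ℤ, (C : ℝ) ∈ pellInterval p.A (2 * X) → (J : ℝ) ∈ pellInterval p.B X →
      0 ≤ J → 32 * p.μ * |C - p.l * p.Y * J| ≤ J) :
    ∃ h k x y, IsSolution { p with h := h, k := k, x := x, y := y } := by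
  obtain ⟨a, ha⟩ := Int.eq_ofNat_of_zero_le (show 0 ≤ p.A by lia)
  obtain ⟨b, hb⟩ := Int.eq_ofNat_of_zero_le (show 0 ≤ p.B by lia)
  have a1 : 1 < a := by lia
  have b1 : 1 < b := by lia
  obtain ⟨x, y, hx, hsq⟩ := exists_isSquare_pellTriple a1 (2 * X).succ_pos
  obtain ⟨h, hh⟩ := (yn_intModEq a1 (2 * X + 1)).symm.dvd
  obtain ⟨k, hk⟩ := (yn_intModEq b1 (X + 1)).symm.dvd
  refine ⟨h, k, x, y, ?_⟩
  set q : Bridge ℤ := { p with h := h, k := k, x := x, y := y } with hq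
  have qA : q.A = a := ha
  have qB : q.B = b := hb
  have hC : q.C = yn a1 (2 * X + 1) := by
    rw [C, qA, hq, hX]
    push_cast at hh
    lia
  have hJ : q.J = yn b1 (X + 1) := by
    rw [J, qB, hq, hX]
    push_cast at hk
    lia
  have hJ0 : 0 < q.J := by
    rw [hJ]
    exact_mod_cast strictMono_y b1 X.succ_pos
  refine ⟨?_, ?_, ?_, ?_⟩
  · rw [P₁, qA, hC, hq, hX]
    exact_mod_cast hsq
  · rw [P₂, qB, hJ, pellSq_yn]
    exact IsSquare.sq _
  · have : 2 * q.b * q.w ^ 2 = 2 ^ (2 * X + 1) := by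
      rw [pow_succ _ (2 * X), pow_mul _ 2 X, mul_assoc, hw]
      ring
    rw [S, T, qA, hC, this]
    exact dvd_two_pow_congr a1 (2 * X + 1)
  · refine Q_pos_of_mul_abs_le hμ hg hl hx hJ0 (hclose q.C q.J ?_ ?_ hJ0.le)
    · rw [ha, hC]
      exact_mod_cast yn_mem_pellInterval a1 (2 * X)
    · rw [hb, hJ]
      exact_mod_cast yn_mem_pellInterval b1 X

theorem mul_abs_sub_le {p : Bridge ℤ} {X V μ : ℕ} {C J : ℤ} (hX : p.X = X) (hX0 : 0 < X)
    (hμ : p.μ = μ) (hμ0 : 0 < μ) (hV : p.V = V) (hlY : p.l * p.Y = upperBinomSum X V)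
    (hU : 16 * (p.l * p.Y * p.X) ≤ p.U) (hVX : 64 * (μ * 4 ^ X) ≤ V)
    (hC : (C : ℝ) ∈ pellInterval p.A (2 * X)) (hJ : (J : ℝ) ∈ pellInterval p.B X) (hJ0 : 0 ≤ J) :
    32 * p.μ * |C - p.l * p.Y * J| ≤ J := by
  have hU0 : 0 ≤ p.U := by
    rw [U_eq]
    positivity
  obtain ⟨u, hu⟩ := Int.eq_ofNat_of_zero_le hU0
  rw [A, hu, hV] at hC
  rw [B, hu, hV] at hJ
  rw [hlY, hu, hX] at hU
  rw [hlY, hμ]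
  push_cast at hC hJ
  exact_mod_cast mul_abs_sub_upperBinomSum_mul_le (μ := μ) (by exact_mod_cast hμ0) hX0
    (by exact_mod_cast hU) (by exact_mod_cast hVX) hC hJ (by exact_mod_cast hJ0)

theorem exists_isSolution {X Y μ j : ℕ} {g : ℤ} (hX : 0 < X) (hY : 0 < Y) (hj : j ≤ X)
    (hμ : 4 ^ j ≤ μ) (hg : g ∈ Set.Ico 0 (μ : ℤ)) (hdvd : Y ∣ X.centralBinom) :
    ∃ h k l w x y : ℤ, IsSolution ⟨X, Y, 4 ^ j, μ, g, h, k, l, w, x, y⟩ := by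
  obtain ⟨w, hw⟩ : ∃ w : ℕ, w = 2 ^ (X - j) := ⟨_, rfl⟩
  obtain ⟨V, hV⟩ : ∃ V : ℕ, V = 64 * Y * μ ^ 2 * (w ^ 2 + 1) := ⟨_, rfl⟩
  have hYV : Y ∣ V := ⟨64 * μ ^ 2 * (w ^ 2 + 1), by rw [hV]; ring⟩
  obtain ⟨l, hl⟩ := (dvd_upperBinomSum_iff hYV).2 hdvd
  have b_mul_w_sq : 4 ^ j * w ^ 2 = 4 ^ X := by
    rw [hw, pow_right_comm, mul_comm, show 2 ^ 2 = 4 by rfl, ← pow_add, Nat.sub_add_cancel hj]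
  have μ_pos : 0 < μ := hμ.trans_lt' (by positivity)
  have l_pos : 0 < l := Nat.pos_of_mul_pos_left (hl ▸ upperBinomSum_pos X V)
  have mul_le_V : 64 * (μ * 4 ^ X) ≤ V := by
    calc 64 * (μ * 4 ^ X) = 64 * 1 * (μ * 4 ^ j) * w ^ 2 := by rw [← b_mul_w_sq]; ring
      _ ≤ 64 * Y * (μ * μ) * (w ^ 2 + 1) := by
        gcongr
        · exact hY
        · lia
      _ = V := by rw [hV]; ring
  set p : Bridge ℤ := ⟨X, Y, 4 ^ j, μ, g, 0, 0, l, w, 0, 0⟩ with hp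
  have pV : p.V = V := by
    rw [Bridge.V, hp, hV]
    push_cast
    rfl
  have hU := sixteen_mul_le_U (p := p) (Nat.cast_pos.2 hX) (Nat.cast_pos.2 hY)
    (Nat.cast_pos.2 l_pos)
  have hUX := sixteen_mul_X_le_U (p := p) (Nat.cast_pos.2 hX) (Nat.cast_pos.2 hY)
    (Nat.cast_ne_zero.2 l_pos.ne')
  have hU16 : 16 ≤ p.U := hUX.trans' (by simp only [hp]; lia)
  have hV64 := sixtyfour_le_V (p := p) (Nat.cast_pos.2 hY) (Nat.cast_pos.2 μ_pos)
  have hUV := U_mul_V_lt_A (p := p) (by lia)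
  have hAB := A_lt_B hU16 hV64
  have l_mul_Y : p.l * p.Y = upperBinomSum X V := by
    rw [hl, hp]
    push_cast
    ring
  obtain ⟨h, k, x, y, hs⟩ := p.exists_isSolution_of_forall_mem_pellInterval rfl (by nlinarith)
    (by nlinarith) (Nat.cast_pos.2 μ_pos) hg (Nat.cast_ne_zero.2 l_pos.ne')
    (by simp only [hp]; exact_mod_cast b_mul_w_sq) fun C J ↦
      mul_abs_sub_le rfl hX rfl μ_pos pV l_mul_Y hU mul_le_V
  exact ⟨h, k, l, w, x, y, hs⟩

end Bridge

/-! ### Combining two squares, a divisibility and an inequality -/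

section CommRing

variable {R : Type*} [CommRing R]

/-- The product of the four numbers `p ± √a ± √b`. -/
def fourSignProd (p a b : R) : R := p ^ 4 - 2 * p ^ 2 * (a + b) + (a - b) ^ 2

theorem fourSignProd_sq_sq (p s t : R) :
    fourSignProd p (s ^ 2) (t ^ 2) = (p - s - t) * (p - s + t) * (p + s - t) * (p + s + t) := by
  rw [fourSignProd]
  ring

theorem fourSignProd_swap (p a b : R) : fourSignProd p a b = fourSignProd p b a := by
  rw [fourSignProd, fourSignProd]
  ring

/-- A polynomial in `A₁` and `A₂` exceeding `√A₁ + √A₂` whenever these roots are integers. -/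
def combineWeight (A₁ A₂ : R) : R := 1 + A₁ ^ 2 + A₂ ^ 2

/-- A factor over `ℤ[√A₁, √A₂]` of the Matiyasevich–Robinson polynomial, for `s = ±√A₁` and
`t = ±√A₂`. -/
def combineFactor (S T r n W s t : R) : R :=
  S ^ 2 * n + T ^ 2 - S ^ 2 * ((2 * r - 1) * (T ^ 2 + (W ^ 2 + s + t * W)))

/-- The Matiyasevich–Robinson relation-combining polynomial, the product of `combineFactor` over the
four choices of the square roots `s` and `t` of `A₁` and `A₂`, with `W = combineWeight A₁ A₂`. -/
def combine (A₁ A₂ S T r n : R) : R :=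
  fourSignProd (S ^ 2 * n + T ^ 2 - S ^ 2 * (2 * r - 1) * (T ^ 2 + combineWeight A₁ A₂ ^ 2))
    ((S ^ 2 * (2 * r - 1)) ^ 2 * A₁) ((S ^ 2 * (2 * r - 1) * combineWeight A₁ A₂) ^ 2 * A₂)

theorem combine_sq_sq (S T r n s t : R) : combine (s ^ 2) (t ^ 2) S T r n =
    combineFactor S T r n (combineWeight (s ^ 2) (t ^ 2)) s t *
    combineFactor S T r n (combineWeight (s ^ 2) (t ^ 2)) s (-t) *
    combineFactor S T r n (combineWeight (s ^ 2) (t ^ 2)) (-s) t *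
    combineFactor S T r n (combineWeight (s ^ 2) (t ^ 2)) (-s) (-t) := by
  rw [combine, ← mul_pow, ← mul_pow, fourSignProd_sq_sq]
  simp only [combineFactor]
  ring

end CommRing

theorem isSquare_of_sq_mul {r A : ℤ} (hr : r ≠ 0) (h : IsSquare (r ^ 2 * A)) : IsSquare A := by
  obtain ⟨x, hx⟩ := h
  rw [← sq] at hx
  obtain ⟨s, rfl⟩ := (Int.pow_dvd_pow_iff two_ne_zero).1 ⟨A, hx.symm⟩
  rw [mul_pow] at hx
  exact mul_left_cancel₀ (pow_ne_zero 2 hr) hx ▸ IsSquare.sq s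

theorem isSquare_left_of_fourSignProd_eq_zero {p a b : ℤ} (hp : p ≠ 0)
    (h : fourSignProd p a b = 0) : IsSquare a := by
  refine isSquare_of_sq_mul (mul_ne_zero two_ne_zero hp) ⟨p ^ 2 + a - b, ?_⟩
  rw [fourSignProd] at h
  linear_combination -h

theorem abs_le_sq (z : ℤ) : |z| ≤ z ^ 2 := sq_abs z ▸ Int.le_self_sq |z|

theorem isSquare_of_fourSignProd_eq_zero {A₁ A₂ p q : ℤ} (hq : q ≠ 0)
    (h : fourSignProd p (q ^ 2 * A₁) ((q * combineWeight A₁ A₂) ^ 2 * A₂) = 0) :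
    IsSquare A₁ ∧ IsSquare A₂ := by
  have W_pos : 0 < combineWeight A₁ A₂ := by
    rw [combineWeight]
    positivity
  obtain rfl | hp := eq_or_ne p 0
  · have A₁_eq : A₁ = combineWeight A₁ A₂ ^ 2 * A₂ := by
      rw [fourSignProd] at h
      refine mul_left_cancel₀ (pow_ne_zero 2 hq) (sub_eq_zero.1 ?_)
      refine (pow_eq_zero_iff two_ne_zero).1 ?_
      linear_combination h
    have abs_lt : |A₁| < combineWeight A₁ A₂ ^ 2 := by
      have := Int.le_self_sq (combineWeight A₁ A₂)
      have := abs_le_sq A₁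
      grind [combineWeight, sq_nonneg A₂]
    have A₁_eq_zero := Int.eq_zero_of_abs_lt_dvd ⟨A₂, A₁_eq⟩ abs_lt
    have A₂_eq_zero : A₂ = 0 :=
      (mul_eq_zero.1 (A₁_eq.symm.trans A₁_eq_zero)).resolve_left (pow_pos W_pos 2).ne'
    simp [A₁_eq_zero, A₂_eq_zero]
  · exact ⟨isSquare_of_sq_mul hq (isSquare_left_of_fourSignProd_eq_zero hp h),
      isSquare_of_sq_mul (mul_ne_zero hq W_pos.ne')
        (isSquare_left_of_fourSignProd_eq_zero hp (fourSignProd_swap p _ _ ▸ h))⟩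

theorem exists_combineFactor_eq_zero {S T r n s t : ℤ}
    (h : combine (s ^ 2) (t ^ 2) S T r n = 0) : ∃ e₁ e₂ : ℤ, |e₁| = |s| ∧ |e₂| = |t| ∧
      combineFactor S T r n (combineWeight (s ^ 2) (t ^ 2)) e₁ e₂ = 0 := by
  rw [combine_sq_sq, mul_eq_zero, mul_eq_zero, mul_eq_zero] at h
  rcases h with ((h | h) | h) | h
  · exact ⟨s, t, rfl, rfl, h⟩
  · exact ⟨s, -t, rfl, abs_neg t, h⟩
  · exact ⟨-s, t, abs_neg s, rfl, h⟩
  · exact ⟨-s, -t, abs_neg s, abs_neg t, h⟩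

theorem abs_add_abs_lt_combineWeight (s t : ℤ) : |s| + |t| < combineWeight (s ^ 2) (t ^ 2) := by
  rw [combineWeight]
  have (z : ℤ) : |z| ≤ (z ^ 2) ^ 2 := (abs_le_sq z).trans (Int.le_self_sq _)
  linarith [this s, this t]

theorem sq_add_add_mul_pos {s t W : ℤ} (h : |s| + |t| < W) : 0 < W ^ 2 + s + t * W := by
  have := neg_abs_le s
  have := neg_abs_le t
  nlinarith [abs_nonneg s, abs_nonneg t]

theorem exists_combine_eq_zero_iff {A₁ A₂ S T r : ℤ} (hS : S ≠ 0) :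
    (∃ n : ℕ, combine A₁ A₂ S T r n = 0) ↔ IsSquare A₁ ∧ IsSquare A₂ ∧ S ∣ T ∧ 0 < r := by
  constructor
  · rintro ⟨n, h⟩
    have hq : S ^ 2 * (2 * r - 1) ≠ 0 := mul_ne_zero (pow_ne_zero 2 hS) (by lia)
    obtain ⟨h₁, h₂⟩ := isSquare_of_fourSignProd_eq_zero hq h
    obtain ⟨s, rfl⟩ := isSquare_iff_exists_sq _ |>.1 h₁
    obtain ⟨t, rfl⟩ := isSquare_iff_exists_sq _ |>.1 h₂
    obtain ⟨e₁, e₂, he₁, he₂, hfactor⟩ := exists_combineFactor_eq_zero h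
    have heq := sub_eq_zero.1 hfactor
    have hpos := sq_add_add_mul_pos (he₁ ▸ he₂ ▸ abs_add_abs_lt_combineWeight s t)
    refine ⟨h₁, h₂, ?_, ?_⟩
    · rw [← Int.pow_dvd_pow_iff two_ne_zero, ← Int.dvd_add_right (dvd_mul_right _ (n : ℤ)), heq]
      exact dvd_mul_right _ _
    · have : 0 ≤ S ^ 2 * (n : ℤ) + T ^ 2 := by positivity
      rw [heq] at this
      have := nonneg_of_mul_nonneg_right this (by positivity)
      have := nonneg_of_mul_nonneg_left this (by positivity)
      lia
  · rintro ⟨h₁, h₂, ⟨c, rfl⟩, hr⟩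
    obtain ⟨s, rfl⟩ := isSquare_iff_exists_sq _ |>.1 h₁
    obtain ⟨t, rfl⟩ := isSquare_iff_exists_sq _ |>.1 h₂
    have hpos := sq_add_add_mul_pos (abs_add_abs_lt_combineWeight s t)
    set Z := combineWeight (s ^ 2) (t ^ 2) ^ 2 + s + t * combineWeight (s ^ 2) (t ^ 2) with hZ
    have c_sq_le : c ^ 2 ≤ (S * c) ^ 2 := by
      rw [mul_pow]
      exact le_mul_of_one_le_left (sq_nonneg c)
        (one_le_sq_iff_one_le_abs S |>.2 (Int.one_le_abs hS))
    have n_nonneg : 0 ≤ (2 * r - 1) * ((S * c) ^ 2 + Z) - c ^ 2 := by nlinarith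
    obtain ⟨n, hn⟩ := Int.eq_ofNat_of_zero_le n_nonneg
    have : combineFactor S (S * c) r n (combineWeight (s ^ 2) (t ^ 2)) s t = 0 := by
      rw [combineFactor, ← hn, ← hZ]
      ring
    exact ⟨n, by simp only [combine_sq_sq, this, zero_mul]⟩

/-! ### Sums of three squares -/

theorem exists_two_mul_abs_add_mul_le {a : ℤ} (ha : 0 < a) (b : ℤ) :
    ∃ k : ℤ, 2 * |b + k * a| ≤ a := by
  refine ⟨-((2 * b + a) / (2 * a)), ?_⟩
  have := Int.emod_add_mul_ediv (2 * b + a) (2 * a)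
  have := Int.emod_lt_of_pos (2 * b + a) (show 0 < 2 * a by lia)
  have := Int.emod_nonneg (2 * b + a) (show 2 * a ≠ 0 by lia)
  cases abs_cases (b + -((2 * b + a) / (2 * a)) * a) <;> nlinarith

/-- The integral binary quadratic form `a x² + 2 b x y + c y²`. -/
structure BinaryForm where
  a : ℤ
  b : ℤ
  c : ℤ

namespace BinaryForm

/-- The value of a binary form. -/
def eval (f : BinaryForm) (x y : ℤ) : ℤ := f.a * x ^ 2 + 2 * f.b * x * y + f.c * y ^ 2

/-- The determinant of the Gram matrix of a binary form. -/
def det (f : BinaryForm) : ℤ := f.a * f.c - f.b ^ 2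

/-- The substitution of `(α x + β y, γ x + δ y)` into a binary form. -/
def subst (f : BinaryForm) (α β γ δ : ℤ) : BinaryForm where
  a := f.eval α γ
  b := f.a * α * β + f.b * (α * δ + β * γ) + f.c * γ * δ
  c := f.eval β δ

theorem eval_subst (f : BinaryForm) (α β γ δ x y : ℤ) :
    (f.subst α β γ δ).eval x y = f.eval (α * x + β * y) (γ * x + δ * y) := by
  simp only [eval, subst]
  ring

theorem det_subst (f : BinaryForm) (α β γ δ : ℤ) :
    (f.subst α β γ δ).det = f.det * (α * δ - β * γ) ^ 2 := by
  simp only [det, eval, subst]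
  ring

/-- Lagrange–Gauss reduction: translate so that `2|b| ≤ a`, and swap the variables if `c < a`. -/
theorem exists_eval_sq_le (f : BinaryForm) (ha : 0 < f.a) (hdet : 0 < f.det) :
    ∃ α β γ δ : ℤ, α * δ - β * γ = 1 ∧ 0 < f.eval α γ ∧ 3 * f.eval α γ ^ 2 ≤ 4 * f.det := by
  induction hn : f.a.toNat using Nat.strong_induction_on generalizing f with
  | _ n ih =>
    obtain ⟨k, hk⟩ := exists_two_mul_abs_add_mul_le ha f.b
    let g := f.subst k (-1) 1 0
    have g_det : g.det = f.det := by
      rw [det_subst]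
      ring
    have g_a : g.a * f.a = f.det + (f.b + k * f.a) ^ 2 := by
      simp only [g, subst, eval, det]
      ring
    have g_a_pos : 0 < g.a := pos_of_mul_pos_left (b := f.a) (by rw [g_a]; positivity) ha.le
    obtain hle | hlt := le_or_gt f.a g.a
    · refine ⟨1, 0, 0, 1, by norm_num, by simpa [eval], ?_⟩
      have : (2 * |f.b + k * f.a|) ^ 2 ≤ f.a ^ 2 := by gcongr
      rw [mul_pow, sq_abs] at this
      simp only [eval]
      nlinarith
    · obtain ⟨α, β, γ, δ, hunit, hpos, hle⟩ :=
        ih g.a.toNat (by lia) g g_a_pos (g_det ▸ hdet) rfl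
      rw [g_det] at hle
      rw [eval_subst] at hpos hle
      refine ⟨k * α + -1 * γ, k * β + -1 * δ, 1 * α + 0 * γ, 1 * β + 0 * δ, ?_, hpos, hle⟩
      linear_combination hunit

theorem exists_sq_add_sq (f : BinaryForm) (ha : 0 < f.a) (hdet : f.det = 1) (y z : ℤ) :
    ∃ p q : ℤ, f.eval y z = p ^ 2 + q ^ 2 := by
  obtain ⟨α, β, γ, δ, hunit, hpos, hle⟩ := f.exists_eval_sq_le ha (by lia)
  let g := f.subst α β γ δ
  have g_a : g.a = 1 := by
    change f.eval α γ = 1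
    nlinarith
  have g_det : g.det = 1 := by rw [det_subst, hdet, hunit, one_pow, one_mul]
  have f_eval : f.eval y z = g.eval (δ * y - β * z) (α * z - γ * y) := by
    rw [eval_subst]
    congr 1
    · linear_combination -y * hunit
    · linear_combination -z * hunit
  refine ⟨δ * y - β * z + g.b * (α * z - γ * y), α * z - γ * y, ?_⟩
  rw [det, g_a] at g_det
  rw [f_eval, eval, g_a]
  linear_combination (α * z - γ * y) ^ 2 * g_det

end BinaryForm

/-- The integral ternary form `a x² + b y² + c z² + 2 r y z + 2 s x z + 2 t x y`. -/
structure TernaryForm where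
  a : ℤ
  b : ℤ
  c : ℤ
  r : ℤ
  s : ℤ
  t : ℤ

namespace TernaryForm

/-- The value of a ternary form. -/
def eval (f : TernaryForm) (x y z : ℤ) : ℤ :=
  f.a * x ^ 2 + f.b * y ^ 2 + f.c * z ^ 2 + 2 * f.r * y * z + 2 * f.s * x * z + 2 * f.t * x * y

/-- The determinant of the Gram matrix of a ternary form. -/
def det (f : TernaryForm) : ℤ :=
  f.a * f.b * f.c + 2 * f.r * f.s * f.t - f.a * f.r ^ 2 - f.b * f.s ^ 2 - f.c * f.t ^ 2

/-- The binary form left in `a f` after completing the square in the first variable. -/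
def dual (f : TernaryForm) : BinaryForm where
  a := f.a * f.b - f.t ^ 2
  b := f.a * f.r - f.s * f.t
  c := f.a * f.c - f.s ^ 2

theorem dual_det (f : TernaryForm) : f.dual.det = f.a * f.det := by
  simp only [BinaryForm.det, dual, det]
  ring

theorem a_mul_eval (f : TernaryForm) (x y z : ℤ) :
    f.a * f.eval x y z = (f.a * x + f.t * y + f.s * z) ^ 2 + f.dual.eval y z := by
  simp only [BinaryForm.eval, dual, eval]
  ring

/-- The substitution of `(k x + y, α x + β z, γ x + δ z)` into a ternary form. -/
def subst (f : TernaryForm) (k α β γ δ : ℤ) : TernaryForm where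
  a := f.eval k α γ
  b := f.a
  c := f.eval 0 β δ
  r := f.t * β + f.s * δ
  s := f.b * α * β + f.c * γ * δ + f.r * (α * δ + β * γ) + f.s * k * δ + f.t * k * β
  t := f.t * α + f.s * γ + k * f.a

theorem eval_subst (f : TernaryForm) (k α β γ δ x y z : ℤ) :
    (f.subst k α β γ δ).eval x y z = f.eval (k * x + y) (α * x + β * z) (γ * x + δ * z) := by
  simp only [eval, subst]
  ring

theorem det_subst (f : TernaryForm) (k α β γ δ : ℤ) :
    (f.subst k α β γ δ).det = f.det * (α * δ - β * γ) ^ 2 := by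
  simp only [det, eval, subst]
  ring

theorem dual_subst_a (f : TernaryForm) (k α β γ δ : ℤ) :
    (f.subst k α β γ δ).dual.a = f.dual.eval α γ := by
  simp only [dual, eval, subst, BinaryForm.eval]
  ring

theorem lt_of_three_mul_sq_le {a a' t g : ℤ} (ha : 1 < a) (hg : a' * a - t ^ 2 = g)
    (hle : 3 * g ^ 2 ≤ 4 * a) (ht : 2 * |t| ≤ a) : a' < a := by
  by_contra! hge
  have t_sq : (2 * |t|) ^ 2 ≤ a ^ 2 := by gcongr
  rw [mul_pow, sq_abs] at t_sq
  have g_ge : 3 * a ^ 2 ≤ 4 * g := by nlinarith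
  have g_sq_ge : (3 * a ^ 2) ^ 2 ≤ (4 * g) ^ 2 := by gcongr
  have : 2 ^ 3 * a ≤ a ^ 3 * a := by gcongr; lia
  lia

theorem exists_subst_a_lt (f : TernaryForm) (ha : 1 < f.a) (hdual : 0 < f.dual.a)
    (hdet : f.det = 1) : ∃ k α β γ δ : ℤ, α * δ - β * γ = 1 ∧ 0 < f.dual.eval α γ ∧
      (f.subst k α β γ δ).a < f.a := by
  have dual_det : f.dual.det = f.a := by rw [dual_det, hdet, mul_one]
  obtain ⟨α, β, γ, δ, hunit, hpos, hle⟩ := f.dual.exists_eval_sq_le hdual (by lia)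
  obtain ⟨k, hk⟩ := exists_two_mul_abs_add_mul_le (zero_lt_one.trans ha) (f.t * α + f.s * γ)
  refine ⟨k, α, β, γ, δ, hunit, hpos, ?_⟩
  exact lt_of_three_mul_sq_le ha (f.dual_subst_a k α β γ δ) (dual_det ▸ hle) hk

theorem exists_sq_add_sq_add_sq (f : TernaryForm) (ha : 0 < f.a) (hdual : 0 < f.dual.a)
    (hdet : f.det = 1) (x y z : ℤ) : ∃ p q w : ℤ, f.eval x y z = p ^ 2 + q ^ 2 + w ^ 2 := by
  induction hn : f.a.toNat using Nat.strong_induction_on generalizing f x y z with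
  | _ n ih =>
    obtain a_eq | a_gt := eq_or_lt_of_le (show 1 ≤ f.a from ha)
    · have dual_det : f.dual.det = 1 := by rw [dual_det, hdet, ← a_eq, one_mul]
      obtain ⟨p, q, h⟩ := f.dual.exists_sq_add_sq hdual dual_det y z
      refine ⟨x + f.t * y + f.s * z, p, q, ?_⟩
      have := f.a_mul_eval x y z
      rw [← a_eq, h] at this
      linear_combination this
    · obtain ⟨k, α, β, γ, δ, hunit, hpos, hlt⟩ := f.exists_subst_a_lt a_gt hdual hdet
      let g := f.subst k α β γ δ
      have g_dual : 0 < g.dual.a := by rwa [dual_subst_a]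
      have g_a : 0 < g.a := pos_of_mul_pos_left (b := f.a)
        ((sq_nonneg g.t).trans_lt (sub_pos.mp g_dual)) ha.le
      have g_det : g.det = 1 := by rw [det_subst, hdet, hunit, one_pow, one_mul]
      have f_eval : f.eval x y z =
          g.eval (δ * y - β * z) (x - k * (δ * y - β * z)) (α * z - γ * y) := by
        rw [eval_subst]
        congr 1
        · ring
        · linear_combination -y * hunit
        · linear_combination -z * hunit
      rw [f_eval]
      exact ih g.a.toNat (by lia) g g_a g_dual g_det _ _ _ rfl

end TernaryForm

theorem exists_sq_add_sq_add_sq_of_dvd {m d p h : ℤ} (hp : 0 < p) (hd : 0 < d)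
    (hpd : p + 1 = m * d) (hdvd : p ∣ d + h ^ 2) : ∃ x y z : ℤ, m = x ^ 2 + y ^ 2 + z ^ 2 := by
  obtain ⟨a, ha⟩ := hdvd
  have a_pos : 0 < a := pos_of_mul_pos_right (a := p) (by rw [← ha]; positivity) hp.le
  let f : TernaryForm := ⟨a, p, m, 0, 1, h⟩
  have f_det : f.det = 1 := by
    simp only [f, TernaryForm.det]
    linear_combination -m * ha - hpd
  have f_dual : f.dual.a = d := by
    simp only [f, TernaryForm.dual]
    linear_combination -ha
  simpa [f, TernaryForm.eval] using
    f.exists_sq_add_sq_add_sq a_pos (by rwa [f_dual]) f_det 0 0 1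

theorem exists_prime_add_one_eq_mul (n : ℕ) :
    ∃ p d : ℕ, p.Prime ∧ p % 4 = 1 ∧ d % 4 = 1 ∧ p + 1 = (4 * n + 2) * d := by
  have hcop : (4 * n + 1).Coprime (4 * (4 * n + 2)) := by
    rw [Nat.coprime_mul_iff_right, mul_comm 4 n, Nat.coprime_mul_right_add_left]
    exact ⟨Nat.coprime_one_left 4, Nat.coprime_self_add_right.2 (Nat.coprime_one_right _)⟩
  obtain ⟨p, -, hp, hmod⟩ := Nat.forall_exists_prime_gt_and_modEq 0 (by lia) hcop
  rw [Nat.ModEq, Nat.mod_eq_of_lt (show 4 * n + 1 < 4 * (4 * n + 2) by lia)] at hmod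
  have hdiv := Nat.mod_add_div p (4 * (4 * n + 2))
  rw [hmod] at hdiv
  refine ⟨p, 4 * (p / (4 * (4 * n + 2))) + 1, hp, ?_, by lia, by linear_combination -hdiv⟩
  rw [← hdiv, mul_assoc]
  lia

theorem exists_dvd_add_sq {p d : ℕ} (hp : p.Prime) (hp4 : p % 4 = 1) (hd4 : d % 4 = 1)
    (hdvd : d ∣ p + 1) : ∃ h : ℤ, (p : ℤ) ∣ d + h ^ 2 := by
  have : Fact p.Prime := ⟨hp⟩
  have hp_odd : Odd p := Nat.odd_iff.2 (by lia)
  have hp_mod : (p : ℤ) ≡ -1 [ZMOD d] :=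
    (Int.modEq_iff_dvd.2 (by simpa using Int.natCast_dvd_natCast.2 hdvd)).symm
  have hjacobi : jacobiSym (-d) p = 1 := by
    rw [jacobiSym.neg _ hp_odd, ZMod.χ₄_nat_one_mod_four hp4, one_mul,
      jacobiSym.quadratic_reciprocity_one_mod_four hd4 hp_odd, jacobiSym.mod_left' hp_mod,
      jacobiSym.at_neg_one (Nat.odd_iff.2 (by lia)), ZMod.χ₄_nat_one_mod_four hd4]
  rw [← jacobiSym.legendreSym.to_jacobiSym] at hjacobi
  have hne : ((-d : ℤ) : ZMod p) ≠ 0 := fun h0 => by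
    simp [(legendreSym.eq_zero_iff p _).2 h0] at hjacobi
  obtain ⟨h', hsq⟩ := (legendreSym.eq_one_iff p hne).1 hjacobi
  obtain ⟨h, rfl⟩ := ZMod.intCast_surjective h'
  refine ⟨h, (ZMod.intCast_zmod_eq_zero_iff_dvd _ _).1 ?_⟩
  push_cast at hsq ⊢
  linear_combination -hsq

theorem exists_sq_add_sq_add_sq_four_mul_add_two (n : ℕ) :
    ∃ x y z : ℤ, (4 * n + 2 : ℤ) = x ^ 2 + y ^ 2 + z ^ 2 := by
  obtain ⟨p, d, hp, hp4, hd4, hpd⟩ := exists_prime_add_one_eq_mul n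
  obtain ⟨h, hdvd⟩ := exists_dvd_add_sq hp hp4 hd4 ⟨4 * n + 2, by rw [hpd, mul_comm]⟩
  exact exists_sq_add_sq_add_sq_of_dvd (mod_cast hp.pos) (by lia) (mod_cast hpd) hdvd

theorem exists_eq_sq_add_self_add_sq_add_self_add_sq (n : ℕ) :
    ∃ u v t : ℤ, (n : ℤ) = u ^ 2 + u + v ^ 2 + v + t ^ 2 := by
  obtain ⟨p, q, w, h⟩ := exists_sq_add_sq_add_sq_four_mul_add_two n
  have sq_mod (x : ℤ) : x ^ 2 % 4 = x % 2 := by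
    rcases Int.emod_two_eq_zero_or_one x with hx | hx
    · rw [hx, ← Int.dvd_iff_emod_eq_zero]
      exact pow_dvd_pow_of_dvd (Int.dvd_of_emod_eq_zero hx) 2
    · rw [hx, Int.sq_mod_four_eq_one_of_odd (Int.odd_iff.2 hx)]
  have of_odd {p q w : ℤ} (hp : p % 2 = 1) (hq : q % 2 = 1)
      (h : (4 * n + 2 : ℤ) = p ^ 2 + q ^ 2 + w ^ 2) :
      ∃ u v t : ℤ, (n : ℤ) = u ^ 2 + u + v ^ 2 + v + t ^ 2 := by
    obtain ⟨u, rfl⟩ := Int.odd_iff.2 hp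
    obtain ⟨v, rfl⟩ := Int.odd_iff.2 hq
    obtain ⟨t, rfl⟩ : (2 : ℤ) ∣ w := by
      have := sq_mod (2 * u + 1)
      have := sq_mod (2 * v + 1)
      have := sq_mod w
      lia
    exact ⟨u, v, t, by linarith⟩
  have := sq_mod p
  have := sq_mod q
  have := sq_mod w
  rcases Int.emod_two_eq_zero_or_one p with hp | hp
  · exact of_odd (p := q) (q := w) (w := p) (by lia) (by lia) (by lia)
  · rcases Int.emod_two_eq_zero_or_one q with hq | hq
    · exact of_odd (p := p) (q := w) (w := q) hp (by lia) (by lia)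
    · exact of_odd hp hq h

/-! ### Binary digits of central binomial coefficients -/

/-- The number of ones in the binary expansion of `n`. -/
def popCount (n : ℕ) : ℕ := (Nat.digits 2 n).sum

theorem popCount_zero : popCount 0 = 0 := by simp [popCount]

theorem popCount_eq_mod_add_div (n : ℕ) : popCount n = n % 2 + popCount (n / 2) := by
  obtain rfl | hn := Nat.eq_zero_or_pos n
  · simp [popCount]
  · rw [popCount, Nat.digits_def' (by norm_num) hn, List.sum_cons, popCount]

theorem popCount_two_mul (n : ℕ) : popCount (2 * n) = popCount n := by
  simp [popCount_eq_mod_add_div (2 * n)]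

theorem popCount_succ_le (n : ℕ) : popCount (n + 1) ≤ popCount n + 1 := by
  induction n using Nat.strong_induction_on with
  | _ n ih =>
    rw [popCount_eq_mod_add_div (n + 1), popCount_eq_mod_add_div n]
    obtain h | h := Nat.mod_two_eq_zero_or_one n
    · rw [show (n + 1) / 2 = n / 2 by lia]
      lia
    · rw [show (n + 1) / 2 = n / 2 + 1 by lia]
      have := ih (n / 2) (by lia)
      lia

theorem popCount_mul_two_pow_add {k c : ℕ} (hc : c < 2 ^ k) (a : ℕ) :
    popCount (a * 2 ^ k + c) = popCount a + popCount c := by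
  induction k generalizing c with
  | zero =>
    obtain rfl : c = 0 := by simpa using hc
    simp [popCount_zero]
  | succ k ih =>
    rw [pow_succ] at hc
    have hdiv : (a * 2 ^ (k + 1) + c) / 2 = a * 2 ^ k + c / 2 := by
      rw [pow_succ]
      lia
    have hmod : (a * 2 ^ (k + 1) + c) % 2 = c % 2 := by
      rw [pow_succ]
      lia
    rw [popCount_eq_mod_add_div (a * 2 ^ (k + 1) + c), popCount_eq_mod_add_div c, hdiv, hmod,
      ih (by lia)]
    lia

theorem popCount_two_pow_sub_one_sub {k n : ℕ} (hn : n < 2 ^ k) :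
    popCount (2 ^ k - 1 - n) + popCount n = k := by
  induction k generalizing n with
  | zero =>
    obtain rfl : n = 0 := by simpa using hn
    simp [popCount_zero]
  | succ k ih =>
    rw [pow_succ] at hn
    have hdiv : (2 ^ (k + 1) - 1 - n) / 2 = 2 ^ k - 1 - n / 2 := by
      rw [pow_succ]
      lia
    have hmod : (2 ^ (k + 1) - 1 - n) % 2 + n % 2 = 1 := by
      rw [pow_succ]
      lia
    have := ih (n := n / 2) (by lia)
    rw [popCount_eq_mod_add_div (2 ^ (k + 1) - 1 - n), popCount_eq_mod_add_div n, hdiv]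
    lia

theorem and_eq_zero_iff_div_two (m n : ℕ) :
    m &&& n = 0 ↔ m / 2 &&& n / 2 = 0 ∧ ¬ (m % 2 = 1 ∧ n % 2 = 1) := by
  rw [← Nat.and_div_two, ← Nat.and_mod_two_eq_one]
  lia

theorem popCount_add_le_and_eq_iff (m n : ℕ) : popCount (m + n) ≤ popCount m + popCount n ∧
    (popCount (m + n) = popCount m + popCount n ↔ m &&& n = 0) := by
  induction m using Nat.strong_induction_on generalizing n with
  | _ m ih =>
    obtain rfl | hm := Nat.eq_zero_or_pos m
    · simp [popCount_zero]
    have hrec := ih (m / 2) (by lia) (n / 2)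
    rw [and_eq_zero_iff_div_two, ← hrec.2, popCount_eq_mod_add_div (m + n),
      popCount_eq_mod_add_div m, popCount_eq_mod_add_div n]
    by_cases hcarry : m % 2 = 1 ∧ n % 2 = 1
    · have := popCount_succ_le (m / 2 + n / 2)
      rw [show (m + n) / 2 = m / 2 + n / 2 + 1 by lia]
      lia
    · rw [show (m + n) / 2 = m / 2 + n / 2 by lia]
      lia

theorem two_pow_dvd_centralBinom_iff (m n : ℕ) : 2 ^ m ∣ n.centralBinom ↔ m ≤ popCount n := by
  have hval : padicValNat 2 n.centralBinom = popCount n := by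
    have := sub_one_mul_padicValNat_choose_eq_sub_sum_digits' (p := 2) (n := n) (k := n)
    rwa [← two_mul, ← popCount, ← popCount, popCount_two_mul, Nat.add_sub_cancel,
      Nat.add_one_sub_one, one_mul] at this
  rw [padicValNat_dvd_iff_le n.centralBinom_ne_zero, hval]

theorem two_pow_sq_dvd_centralBinom_iff {k S T : ℕ} (hS : S < 2 ^ k) (hT : T < 2 ^ k) :
    (2 ^ k) ^ 2 ∣ ((2 ^ k - 1) * ((S + T + 1) * 2 ^ k + T + 1)).centralBinom ↔ S &&& T = 0 := by
  have blocks : (2 ^ k - 1) * ((S + T + 1) * 2 ^ k + T + 1) =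
      ((S + T) * 2 ^ k + (2 ^ k - 1 - S)) * 2 ^ k + (2 ^ k - 1 - T) := by
    zify [Nat.one_le_two_pow, Nat.le_sub_one_of_lt hS, Nat.le_sub_one_of_lt hT]
    ring
  rw [← pow_mul, two_pow_dvd_centralBinom_iff, blocks, popCount_mul_two_pow_add (by lia),
    popCount_mul_two_pow_add (by lia), ← (popCount_add_le_and_eq_iff S T).2]
  have := popCount_two_pow_sub_one_sub hS
  have := popCount_two_pow_sub_one_sub hT
  have := (popCount_add_le_and_eq_iff S T).1
  lia

/-! ### Masks -/

theorem add_two_pow_mul_and_add_two_pow_mul {m c d : ℕ} (hc : c < 2 ^ m) (hd : d < 2 ^ m)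
    (a b : ℕ) : (c + 2 ^ m * a) &&& (d + 2 ^ m * b) = (c &&& d) + 2 ^ m * (a &&& b) := by
  have testBit {c : ℕ} (hc : c < 2 ^ m) (a i : ℕ) :
      (c + 2 ^ m * a).testBit i = if i < m then c.testBit i else a.testBit (i - m) := by
    rw [add_comm, Nat.testBit_two_pow_mul_add _ hc]
  refine Nat.eq_of_testBit_eq fun i => ?_
  rw [Nat.testBit_and, testBit hc, testBit hd, testBit (Nat.and_lt_two_pow _ hd)]
  split_ifs <;> rw [Nat.testBit_and]

theorem and_two_pow_sub_one_sub_eq_zero_iff {m g D : ℕ} (hg : g < 2 ^ m) (hD : D < 2 ^ m) :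
    g &&& (2 ^ m - 1 - D) = 0 ↔ g &&& D = g := by
  rw [Nat.sub_sub, add_comm 1 D, Nat.eq_iff_testBit_eq, Nat.eq_iff_testBit_eq]
  refine forall_congr' fun i => ?_
  rw [Nat.testBit_and, Nat.testBit_and, Nat.testBit_two_pow_sub_succ hD, Nat.zero_testBit]
  obtain hi | hi := lt_or_ge i m
  · cases g.testBit i <;> simp [hi]
  · rw [Nat.testBit_eq_false_of_lt (hg.trans_le (Nat.pow_le_pow_right two_pos hi))]
    simp

theorem and_two_pow_mul_eq_zero_iff (K r t : ℕ) :
    K &&& 2 ^ t * (2 ^ r - 1) = 0 ↔ K / 2 ^ t % 2 ^ r = 0 := by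
  have h := add_two_pow_mul_and_add_two_pow_mul (Nat.mod_lt K (by positivity))
    (Nat.two_pow_pos t) (K / 2 ^ t) (2 ^ r - 1)
  rw [Nat.mod_add_div, zero_add, Nat.and_zero, zero_add, Nat.and_two_pow_sub_one_eq_mod] at h
  simp [h]

theorem and_mask_eq_zero_iff {m g D : ℕ} (hg : g < 2 ^ m) (hD : D < 2 ^ m) (K r : ℕ) :
    (g + 2 ^ m * K) &&& (2 ^ m - 1 - D + 2 ^ m * (2 ^ m * (2 ^ r - 1))) = 0 ↔
      g &&& D = g ∧ K / 2 ^ m % 2 ^ r = 0 := by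
  rw [add_two_pow_mul_and_add_two_pow_mul hg (by lia), ← and_two_pow_sub_one_sub_eq_zero_iff hg hD,
    ← and_two_pow_mul_eq_zero_iff]
  simp

theorem sum_mul_pow_lt {B : ℕ} (hB : 0 < B) {e : ℕ → ℕ} (he : StrictMono e) {ν : ℕ}
    {z : Fin ν → ℕ} (hz : ∀ i, z i < B) : ∑ i, z i * B ^ e i < B ^ e ν := by
  induction ν with
  | zero => simpa using Nat.pow_pos hB
  | succ ν ih =>
    rw [Fin.sum_univ_castSucc]
    calc ∑ i : Fin ν, z i.castSucc * B ^ e i + z (Fin.last ν) * B ^ e ν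
        < B ^ e ν + z (Fin.last ν) * B ^ e ν := by gcongr; exact ih fun i => hz _
      _ = (z (Fin.last ν) + 1) * B ^ e ν := by ring
      _ ≤ B * B ^ e ν := by gcongr; exact hz _
      _ = B ^ (e ν + 1) := by ring
      _ ≤ B ^ e (ν + 1) := Nat.pow_le_pow_right hB (he ν.lt_succ_self)

theorem and_add_two_pow_mul_eq_self_iff {m D : ℕ} (hD : D < 2 ^ m) (g r : ℕ) :
    g &&& (D + 2 ^ m * (2 ^ r - 1)) = g ↔ g % 2 ^ m &&& D = g % 2 ^ m ∧ g / 2 ^ m < 2 ^ r := by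
  have hmod : (g % 2 ^ m &&& D) < 2 ^ m := Nat.and_lt_two_pow _ hD
  have h := add_two_pow_mul_and_add_two_pow_mul (Nat.mod_lt g (by positivity)) hD
    (g / 2 ^ m) (2 ^ r - 1)
  rw [Nat.mod_add_div, Nat.and_two_pow_sub_one_eq_mod] at h
  rw [h, ← Nat.mod_eq_iff_lt (by positivity)]
  constructor
  · intro heq
    have heq_mod := congrArg (· % 2 ^ m) heq
    have heq_div := congrArg (· / 2 ^ m) heq
    simp only [Nat.add_mul_mod_self_left, Nat.mod_eq_of_lt hmod] at heq_mod
    simp only [Nat.add_mul_div_left _ _ (Nat.two_pow_pos m), Nat.div_eq_of_lt hmod,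
      zero_add] at heq_div
    exact ⟨heq_mod, heq_div⟩
  · rintro ⟨heq_mod, heq_div⟩
    rw [heq_mod, heq_div, Nat.mod_add_div]

theorem and_sum_pow_eq_self_iff {m r : ℕ} (hrm : r ≤ m) {e : ℕ → ℕ} (he : StrictMono e) (ν g : ℕ) :
    g &&& ∑ i : Fin ν, (2 ^ r - 1) * (2 ^ m) ^ e i = g ↔
      ∃ z : Fin ν → ℕ, (∀ i, z i < 2 ^ r) ∧ g = ∑ i, z i * (2 ^ m) ^ e i := by
  induction ν generalizing g with
  | zero => simp [eq_comm]
  | succ ν ih =>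
    have hrm' : 2 ^ r ≤ 2 ^ m := Nat.pow_le_pow_right two_pos hrm
    have hr : 0 < 2 ^ r := by positivity
    have lt_pow {z : Fin ν → ℕ} (hz : ∀ i, z i < 2 ^ r) :
        ∑ i : Fin ν, z i * (2 ^ m) ^ e i < 2 ^ (m * e ν) := by
      rw [pow_mul]
      exact sum_mul_pow_lt (by positivity) he fun i => (hz i).trans_le hrm'
    have mask_lt := lt_pow fun _ => Nat.sub_one_lt hr.ne'
    rw [Fin.sum_univ_castSucc, mul_comm _ ((2 ^ m) ^ e (Fin.last ν : ℕ)), Fin.val_last, ← pow_mul]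
    simp only [Fin.val_castSucc]
    rw [and_add_two_pow_mul_eq_self_iff mask_lt, ih]
    constructor
    · rintro ⟨⟨z, hz, hsum⟩, hlt⟩
      refine ⟨Fin.snoc z (g / 2 ^ (m * e ν)), ?_, ?_⟩
      · simpa [Fin.forall_fin_succ'] using ⟨hz, hlt⟩
      · simp only [Fin.sum_univ_castSucc, Fin.snoc_castSucc, Fin.snoc_last, Fin.val_castSucc,
          Fin.val_last]
        rw [← hsum, ← pow_mul, Nat.mod_add_div']
    · rintro ⟨z, hz, rfl⟩
      have hlo := lt_pow fun i => hz i.castSucc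
      simp only [Fin.sum_univ_castSucc, Fin.val_castSucc, Fin.val_last, pow_mul] at hlo ⊢
      refine ⟨⟨fun i => z i.castSucc, fun i => hz _, ?_⟩, ?_⟩
      · rw [Nat.add_mul_mod_self_right, Nat.mod_eq_of_lt hlo]
      · rw [Nat.add_mul_div_right _ _ (by positivity), Nat.div_eq_of_lt hlo, zero_add]
        exact hz _

/-! ### Coding a polynomial equation into one digit -/

section Coding

open scoped Polynomial Nat

variable {n : ℕ}

/-- The number with digits `s` in base `δ + 1`, used to index the monomial with exponents `s`. -/
def weight (δ : ℕ) (s : Fin n → ℕ) : ℕ := ∑ i, s i * (δ + 1) ^ (i : ℕ)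

theorem weight_eq_finFunctionFinEquiv {δ : ℕ} {s : Fin n → ℕ} (hs : ∀ i, s i ≤ δ) :
    weight δ s = finFunctionFinEquiv fun i ↦ (⟨s i, Nat.lt_succ_of_le (hs i)⟩ : Fin (δ + 1)) := by
  simp only [weight, finFunctionFinEquiv_apply]

theorem weight_lt {δ : ℕ} {s : Fin n → ℕ} (hs : ∀ i, s i ≤ δ) : weight δ s < (δ + 1) ^ n := by
  rw [weight_eq_finFunctionFinEquiv hs]
  exact Fin.isLt _

theorem weight_inj {δ : ℕ} {s t : Fin n → ℕ} (hs : ∀ i, s i ≤ δ) (ht : ∀ i, t i ≤ δ) :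
    weight δ s = weight δ t ↔ s = t := by
  refine ⟨fun h ↦ ?_, fun h ↦ h ▸ rfl⟩
  rw [weight_eq_finFunctionFinEquiv hs, weight_eq_finFunctionFinEquiv ht] at h
  have := finFunctionFinEquiv.injective (Fin.ext h)
  exact funext fun i ↦ congrArg Fin.val (congrFun this i)

/-- The polynomial `1 + ∑ xᵢ T ^ (δ + 1) ^ i`, whose `δ`-th power has among its coefficients, up to
multinomial factors, all the monomials of degree at most `δ` in the `xᵢ`. -/
noncomputable def codePoly (δ : ℕ) (x : Fin n → ℕ) : ℕ[X] :=
  1 + ∑ i, Polynomial.C (x i) * Polynomial.X ^ (δ + 1) ^ (i : ℕ)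

theorem codePoly_pow (δ d : ℕ) (x : Fin n → ℕ) :
    codePoly δ x ^ d = ∑ k ∈ Finset.piAntidiag (Finset.univ : Finset (Option (Fin n))) d,
      Polynomial.monomial (weight δ fun i ↦ k (some i))
        (Nat.multinomial Finset.univ k * ∏ i, x i ^ k (some i)) := by
  have h : codePoly δ x = ∑ o : Option (Fin n),
      o.elim 1 fun i ↦ Polynomial.C (x i) * Polynomial.X ^ (δ + 1) ^ (i : ℕ) := by
    rw [Fintype.sum_option]
    rfl
  rw [h, Finset.sum_pow_eq_sum_piAntidiag]
  refine Finset.sum_congr rfl fun k _ ↦ ?_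
  simp only [Fintype.prod_option, Option.elim, one_pow, one_mul, mul_pow, ← pow_mul,
    Finset.prod_mul_distrib, Finset.prod_pow_eq_pow_sum, ← Polynomial.C_mul_X_pow_eq_monomial,
    map_mul, map_prod, map_pow, eq_natCast, weight, mul_comm ((δ + 1) ^ _)]
  ring

theorem coeff_codePoly_pow {δ : ℕ} (x : Fin n → ℕ) {s : Fin n → ℕ} (hs : ∑ i, s i ≤ δ) :
    (codePoly δ x ^ δ).coeff (weight δ s) * ((δ - ∑ i, s i)! * ∏ i, (s i)!) =
      δ ! * ∏ i, x i ^ s i := by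
  have le_of_sum_le {t : Fin n → ℕ} (ht : ∑ i, t i ≤ δ) (i : Fin n) : t i ≤ δ :=
    (Finset.single_le_sum (fun _ _ ↦ Nat.zero_le _) (Finset.mem_univ i)).trans ht
  set k₀ : Option (Fin n) → ℕ := fun o ↦ o.elim (δ - ∑ i, s i) s with k₀_def
  have sum_k₀ : ∑ o, k₀ o = δ := by
    rw [Fintype.sum_option]
    exact Nat.sub_add_cancel hs
  have unique : ∀ k ∈ Finset.piAntidiag (Finset.univ : Finset (Option (Fin n))) δ,
      k ≠ k₀ → (weight δ fun i ↦ k (some i)) ≠ weight δ s := by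
    intro k hk hne heq
    have sum_k : k none + ∑ i, k (some i) = δ := by
      rw [← Fintype.sum_option, (Finset.mem_piAntidiag.1 hk).1]
    have k_some := (weight_inj (le_of_sum_le (by lia)) (le_of_sum_le hs)).1 heq
    refine hne (funext fun o ↦ ?_)
    cases o with
    | none => simp only [k₀_def, Option.elim, ← k_some]; lia
    | some i => exact congrFun k_some i
  rw [codePoly_pow, Polynomial.finsetSum_coeff, Finset.sum_eq_single k₀
    (fun k hk hne ↦ Polynomial.coeff_monomial_of_ne _ (unique k hk hne).symm)
    (fun h ↦ absurd (Finset.mem_piAntidiag.2 ⟨sum_k₀, fun _ _ ↦ Finset.mem_univ _⟩) h)]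
  have spec := Nat.multinomial_spec Finset.univ k₀
  rw [sum_k₀, Fintype.prod_option] at spec
  change (Polynomial.monomial (weight δ s) _).coeff _ * _ = _
  rw [Polynomial.coeff_monomial_same, ← spec]
  simp only [k₀_def, Option.elim]
  ring

theorem coeff_le_eval_one (p : ℕ[X]) (i : ℕ) : p.coeff i ≤ p.eval 1 := by
  rw [Polynomial.eval_eq_sum, Polynomial.sum_def]
  by_cases hi : i ∈ p.support
  · simpa using Finset.single_le_sum (f := fun j ↦ p.coeff j * 1 ^ j)
      (fun _ _ ↦ Nat.zero_le _) hi
  · rw [Polynomial.notMem_support_iff.1 hi]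
    exact Nat.zero_le _

theorem coeff_codePoly_pow_le (δ d : ℕ) {x : Fin n → ℕ} {b : ℕ} (hb : 0 < b)
    (hx : ∀ i, x i ≤ b) (i : ℕ) : (codePoly δ x ^ d).coeff i ≤ ((n + 1) * b) ^ d := by
  refine (coeff_le_eval_one _ i).trans ?_
  rw [Polynomial.eval_pow]
  refine Nat.pow_le_pow_left ?_ d
  calc (codePoly δ x).eval 1 = 1 + ∑ i, x i := by
        simp [codePoly, Polynomial.eval_finsetSum]
    _ ≤ b + ∑ _ : Fin n, b := Nat.add_le_add hb (Finset.sum_le_sum fun i _ ↦ hx i)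
    _ = (n + 1) * b := by
        rw [Finset.sum_const, Finset.card_univ, Fintype.card_fin, smul_eq_mul]
        ring

/-- The coefficient of the monomial with exponents `s` in `P`, multiplied by the factor which turns
the multinomial coefficient of `s` in a `δ`-th power into `δ!`. -/
noncomputable def dualCoeff (δ : ℕ) (P : MvPolynomial (Fin n) ℤ) (s : Fin n →₀ ℕ) : ℤ :=
  P.coeff s * (((δ - ∑ i, s i)! * ∏ i, (s i)! : ℕ) : ℤ)

/-- The polynomial whose product with `codePoly δ x ^ δ` has `δ! * P(x)` as its coefficient of index
`(δ + 1) ^ n`. -/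
noncomputable def dualPoly (δ : ℕ) (P : MvPolynomial (Fin n) ℤ) : ℤ[X] :=
  ∑ s ∈ P.support, Polynomial.monomial ((δ + 1) ^ n - weight δ s) (dualCoeff δ P s)

/-- A bound for the coefficients of `codePoly δ x ^ δ * dualPoly δ P` when `x` takes values in
`{0, 1}`. -/
noncomputable def codeBound (δ : ℕ) (P : MvPolynomial (Fin n) ℤ) : ℕ :=
  (n + 1) ^ δ * ∑ s ∈ P.support, (dualCoeff δ P s).natAbs

theorem natDegree_dualPoly_le (δ : ℕ) (P : MvPolynomial (Fin n) ℤ) :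
    (dualPoly δ P).natDegree ≤ (δ + 1) ^ n :=
  Polynomial.natDegree_sum_le_of_forall_le _ _ fun _ _ ↦
    (Polynomial.natDegree_monomial_le _).trans (Nat.sub_le _ _)

theorem abs_eval_dualPoly_le (δ : ℕ) (P : MvPolynomial (Fin n) ℤ) {B : ℤ} (hB : 1 ≤ B) :
    |(dualPoly δ P).eval B| ≤ codeBound δ P * B ^ (δ + 1) ^ n := by
  rw [dualPoly, Polynomial.eval_finsetSum]
  refine (Finset.abs_sum_le_sum_abs _ _).trans ?_
  calc ∑ s ∈ P.support, |(Polynomial.monomial ((δ + 1) ^ n - weight δ s) (dualCoeff δ P s)).eval B|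
      ≤ ∑ s ∈ P.support, ((dualCoeff δ P s).natAbs : ℤ) * B ^ (δ + 1) ^ n := by
        refine Finset.sum_le_sum fun s _ ↦ ?_
        rw [Polynomial.eval_monomial, abs_mul, Int.abs_eq_natAbs (dualCoeff δ P s),
          abs_of_nonneg (a := B ^ _) (by positivity)]
        gcongr
        exact Nat.sub_le _ _
    _ ≤ codeBound δ P * B ^ (δ + 1) ^ n := by
        rw [← Finset.sum_mul, codeBound]
        gcongr
        exact_mod_cast Nat.le_mul_of_pos_left _ (by positivity)

/-- The polynomial with `δ! * P(x)` as its coefficient of index `(δ + 1) ^ n`. -/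
noncomputable def codeProd (δ : ℕ) (P : MvPolynomial (Fin n) ℤ) (x : Fin n → ℕ) : ℤ[X] :=
  (codePoly δ x).map (Nat.castRingHom ℤ) ^ δ * dualPoly δ P

theorem eval_codeProd (δ : ℕ) (P : MvPolynomial (Fin n) ℤ) (x : Fin n → ℕ) (B : ℤ) :
    (codeProd δ P x).eval B =
      (1 + ∑ i, (x i : ℤ) * B ^ (δ + 1) ^ (i : ℕ)) ^ δ * (dualPoly δ P).eval B := by
  simp [codeProd, codePoly, Polynomial.eval_finsetSum, Polynomial.map_sum]

theorem natDegree_codeProd_lt (δ : ℕ) (P : MvPolynomial (Fin n) ℤ) (x : Fin n → ℕ) :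
    (codeProd δ P x).natDegree < (δ + 1) * (δ + 1) ^ n + 1 := by
  have codePoly_le : (codePoly δ x).natDegree ≤ (δ + 1) ^ n := by
    refine Polynomial.natDegree_add_le_of_degree_le (by simp) ?_
    exact Polynomial.natDegree_sum_le_of_forall_le _ _ fun i _ ↦
      (Polynomial.natDegree_C_mul_X_pow_le _ _).trans
        (Nat.pow_le_pow_right δ.succ_pos i.isLt.le)
  have : (codeProd δ P x).natDegree ≤ δ * (δ + 1) ^ n + (δ + 1) ^ n :=
    Polynomial.natDegree_mul_le_of_le
      (Polynomial.natDegree_pow_le_of_le δ (Polynomial.natDegree_map_le.trans codePoly_le))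
      (natDegree_dualPoly_le δ P)
  lia

theorem coeff_codeProd {δ : ℕ} {P : MvPolynomial (Fin n) ℤ} (hP : P.totalDegree ≤ δ)
    (x : Fin n → ℕ) :
    (codeProd δ P x).coeff ((δ + 1) ^ n) = δ ! * MvPolynomial.eval (fun i ↦ (x i : ℤ)) P := by
  rw [codeProd, dualPoly, Finset.mul_sum, Polynomial.finsetSum_coeff, MvPolynomial.eval_eq',
    Finset.mul_sum]
  refine Finset.sum_congr rfl fun s hs ↦ ?_
  have sum_le : ∑ i, s i ≤ δ := by
    have := (MvPolynomial.le_totalDegree hs).trans hP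
    rwa [Finsupp.sum_fintype _ _ fun _ ↦ rfl] at this
  have weight_le : weight δ s ≤ (δ + 1) ^ n := (weight_lt fun i ↦
    (Finset.single_le_sum (fun _ _ ↦ Nat.zero_le _) (Finset.mem_univ i)).trans sum_le).le
  have key := congrArg (Nat.cast (R := ℤ)) (coeff_codePoly_pow x sum_le)
  rw [← Polynomial.C_mul_X_pow_eq_monomial, mul_left_comm, Polynomial.coeff_C_mul,
    Polynomial.coeff_mul_X_pow', if_pos (Nat.sub_le _ _), Nat.sub_sub_self weight_le,
    ← Polynomial.map_pow, Polynomial.coeff_map, dualCoeff]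
  simp only [Nat.cast_mul, Nat.cast_prod, Nat.cast_pow, eq_natCast] at key ⊢
  linear_combination P.coeff s * key

theorem abs_coeff_codeProd_le (δ : ℕ) (P : MvPolynomial (Fin n) ℤ) {x : Fin n → ℕ} {b : ℕ}
    (hb : 0 < b) (hx : ∀ i, x i ≤ b) (i : ℕ) :
    |(codeProd δ P x).coeff i| ≤ codeBound δ P * b ^ δ := by
  rw [codeProd, dualPoly, Finset.mul_sum, Polynomial.finsetSum_coeff]
  refine (Finset.abs_sum_le_sum_abs _ _).trans ?_
  have term_le (s : Fin n →₀ ℕ) :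
      |((codePoly δ x).map (Nat.castRingHom ℤ) ^ δ *
        Polynomial.monomial ((δ + 1) ^ n - weight δ s) (dualCoeff δ P s)).coeff i| ≤
      (dualCoeff δ P s).natAbs * (((n + 1) * b) ^ δ : ℕ) := by
    rw [← Polynomial.C_mul_X_pow_eq_monomial, mul_left_comm, Polynomial.coeff_C_mul, abs_mul,
      Int.abs_eq_natAbs (dualCoeff δ P s), Polynomial.coeff_mul_X_pow', ← Polynomial.map_pow]
    gcongr
    split_ifs
    · rw [Polynomial.coeff_map, eq_natCast, Nat.abs_cast, Nat.cast_le]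
      exact coeff_codePoly_pow_le δ δ hb hx _
    · rw [abs_zero]
      positivity
  refine (Finset.sum_le_sum fun s _ ↦ term_le s).trans_eq ?_
  rw [← Finset.sum_mul, codeBound, mul_pow]
  push_cast
  ring

theorem sum_mul_pow_mem_Ico {B : ℤ} (hB : 0 < B) {d : ℕ → ℤ} (hd : ∀ i, d i ∈ Set.Ico 0 B)
    (L : ℕ) : ∑ i ∈ Finset.range L, d i * B ^ i ∈ Set.Ico 0 (B ^ L) := by
  induction L with
  | zero => simp
  | succ L ih =>
    rw [Finset.sum_range_succ, pow_succ]
    have : 0 < B ^ L := by positivity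
    have lower : 0 ≤ d L * B ^ L := mul_nonneg (hd L).1 this.le
    have upper : (d L + 1) * B ^ L ≤ B * B ^ L := mul_le_mul_of_nonneg_right (hd L).2 this.le
    constructor <;> linarith [ih.1, ih.2]

theorem ediv_pow_eq_sum {B : ℤ} (hB : 0 < B) {d : ℕ → ℤ} (hd : ∀ i, d i ∈ Set.Ico 0 B)
    (L m : ℕ) :
    (∑ i ∈ Finset.range (L + m), d i * B ^ i) / B ^ L =
      ∑ i ∈ Finset.range m, d (L + i) * B ^ i := by
  have low := sum_mul_pow_mem_Ico hB hd L
  have : ∑ i ∈ Finset.range m, d (L + i) * B ^ (L + i) =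
      B ^ L * ∑ i ∈ Finset.range m, d (L + i) * B ^ i := by
    rw [Finset.mul_sum]
    exact Finset.sum_congr rfl fun i _ ↦ by ring
  rw [Finset.sum_range_add, this, Int.add_mul_ediv_left _ _ (by positivity),
    Int.ediv_eq_zero_of_lt low.1 low.2, zero_add]

-- Adding `H` to every coefficient makes all of them base-`2H` digits without changing them modulo
-- `H`, so the digit of index `L` reveals whether the coefficient vanishes.
theorem shifted_eval_digit_emod_eq_zero_iff {H : ℤ} {p : ℤ[X]} (hp : ∀ i, |p.coeff i| < H)
    {L E : ℕ} (hLE : L < E) (hpE : p.natDegree < E) :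
    (p.eval (2 * H) + H * ∑ i ∈ Finset.range E, (2 * H) ^ i) / (2 * H) ^ L % H = 0 ↔
      p.coeff L = 0 := by
  have hH : 0 < H := (abs_nonneg _).trans_lt (hp 0)
  have digit_mem (i : ℕ) : p.coeff i + H ∈ Set.Ico 0 (2 * H) := by
    have := abs_lt.1 (hp i)
    constructor <;> linarith
  have expand : p.eval (2 * H) + H * ∑ i ∈ Finset.range E, (2 * H) ^ i =
      ∑ i ∈ Finset.range E, (p.coeff i + H) * (2 * H) ^ i := by
    simp only [Polynomial.eval_eq_sum_range' hpE, Finset.mul_sum, add_mul, Finset.sum_add_distrib]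
  obtain ⟨m, rfl⟩ := Nat.exists_eq_add_of_lt hLE
  have quotient_modEq : ∑ i ∈ Finset.range (m + 1), (p.coeff (L + i) + H) * (2 * H) ^ i ≡
      p.coeff L [ZMOD H] := by
    refine (Int.modEq_iff_dvd.2 ?_).symm
    rw [Finset.sum_range_succ', add_zero, pow_zero, mul_one, add_sub_assoc, add_sub_cancel_left]
    exact dvd_add (Finset.dvd_sum fun i _ ↦
      (dvd_pow (dvd_mul_left H 2) i.succ_ne_zero).mul_left _) dvd_rfl
  rw [expand, add_assoc, ediv_pow_eq_sum (by linarith) digit_mem, quotient_modEq.eq,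
    ← Int.dvd_iff_emod_eq_zero]
  exact ⟨fun h ↦ Int.eq_zero_of_abs_lt_dvd h (hp L), fun h ↦ h ▸ dvd_zero H⟩

theorem digit_emod_eq_zero_iff_eval_eq_zero {δ : ℕ} {P : MvPolynomial (Fin n) ℤ}
    (hP : P.totalDegree ≤ δ) {x : Fin n → ℕ} {b : ℕ} (hb : 0 < b) (hx : ∀ i, x i ≤ b) {H : ℤ}
    (hH : codeBound δ P * (b : ℤ) ^ δ < H) :
    ((1 + ∑ i, (x i : ℤ) * (2 * H) ^ (δ + 1) ^ (i : ℕ)) ^ δ * (dualPoly δ P).eval (2 * H) +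
      H * ∑ i ∈ Finset.range ((δ + 1) * (δ + 1) ^ n + 1), (2 * H) ^ i) /
        (2 * H) ^ (δ + 1) ^ n % H = 0 ↔ MvPolynomial.eval (fun i ↦ (x i : ℤ)) P = 0 := by
  rw [← eval_codeProd, shifted_eval_digit_emod_eq_zero_iff
    (fun i ↦ (abs_coeff_codeProd_le δ P hb hx i).trans_lt hH)
    (Nat.lt_succ_of_le (Nat.le_mul_of_pos_left _ δ.succ_pos)) (natDegree_codeProd_lt δ P x),
    coeff_codeProd hP]
  simp [Nat.factorial_ne_zero]

end Coding

/-! ### Polynomial identities and degrees -/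

theorem map_combine {R R' : Type*} [CommRing R] [CommRing R'] (φ : R →+* R') (A₁ A₂ s t r n : R) :
    combine (φ A₁) (φ A₂) (φ s) (φ t) (φ r) (φ n) = φ (combine A₁ A₂ s t r n) := by
  simp only [combine, fourSignProd, combineWeight, map_add, map_sub, map_mul, map_pow, map_one,
    map_ofNat]

namespace Bridge

/-- The polynomial in the additional unknown `n` which vanishes for some `n : ℕ` precisely at the
solutions. -/
def form {R : Type*} [CommRing R] (p : Bridge R) (n : R) : R := combine p.P₁ p.P₂ p.S p.T p.Q n

theorem exists_form_eq_zero_iff (p : Bridge ℤ) : (∃ n : ℕ, p.form n = 0) ↔ p.IsSolution := by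
  have S_ne_zero : p.S ≠ 0 := by
    rw [S]
    lia
  simp only [form, exists_combine_eq_zero_iff S_ne_zero]
  exact ⟨fun ⟨h₁, h₂, h₃, h₄⟩ ↦ ⟨h₁, h₂, h₃, h₄⟩,
    fun h ↦ ⟨h.isSquare_P₁, h.isSquare_P₂, h.S_dvd_T, h.Q_pos⟩⟩

section Map

variable {R R' : Type*} [CommRing R] [CommRing R']

/-- The image of the quantities of a `Bridge` under a ring homomorphism. -/
def map (φ : R →+* R') (p : Bridge R) : Bridge R' :=
  ⟨φ p.X, φ p.Y, φ p.b, φ p.μ, φ p.g, φ p.h, φ p.k, φ p.l, φ p.w, φ p.x, φ p.y⟩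

variable (φ : R →+* R') (p : Bridge R)

theorem map_A : (p.map φ).A = φ p.A := by
  simp only [map, A, U, V, map_add, map_mul, map_pow, map_one, map_ofNat]

theorem map_C : (p.map φ).C = φ p.C := by
  rw [C, C, map_A]
  simp only [map, map_add, map_sub, map_mul, map_one, map_ofNat]

theorem map_J : (p.map φ).J = φ p.J := by
  simp only [map, J, B, U, V, map_add, map_sub, map_mul, map_pow, map_one, map_ofNat]

theorem map_P₁ : (p.map φ).P₁ = φ p.P₁ := by
  rw [P₁, P₁, map_A, map_C]
  simp only [map, pellTriple, pellSq, pellE, pellF, pellG, pellH, map_add, map_sub, map_mul,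
    map_pow, map_one, map_ofNat]

theorem map_P₂ : (p.map φ).P₂ = φ p.P₂ := by
  rw [P₂, P₂, map_J]
  simp only [map, pellSq, B, U, V, map_add, map_sub, map_mul, map_pow, map_one, map_ofNat]

theorem map_S : (p.map φ).S = φ p.S := by
  simp only [S, map_A, map_sub, map_mul, map_ofNat]

theorem map_T : (p.map φ).T = φ p.T := by
  rw [T, T, map_A, map_C]
  simp only [map, map_add, map_sub, map_mul, map_pow, map_one, map_ofNat]

theorem map_Q : (p.map φ).Q = φ p.Q := by
  rw [Q, Q, map_C, map_J]
  simp only [map, map_add, map_sub, map_mul, map_pow, map_one, map_ofNat]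

theorem map_form (n : R) : (p.map φ).form (φ n) = φ (p.form n) := by
  rw [form, form, map_P₁, map_P₂, map_S, map_T, map_Q, map_combine]

end Map

end Bridge

section Degree

open MvPolynomial

variable {σ R : Type*} [CommRing R]

theorem totalDegree_ofNat (n : ℕ) [n.AtLeastTwo] :
    (OfNat.ofNat n : MvPolynomial σ R).totalDegree = 0 := totalDegree_C _

theorem totalDegree_pellSq_le {a c : MvPolynomial σ R} {d e : ℕ} (ha : a.totalDegree ≤ d)
    (hc : c.totalDegree ≤ e) : (pellSq a c).totalDegree ≤ 2 * d + 2 * e := by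
  grind -ring [pellSq, totalDegree_add, totalDegree_sub, totalDegree_mul, totalDegree_pow,
    totalDegree_one]

theorem totalDegree_combine_le {A₁ A₂ S T r n : MvPolynomial σ R} {dA dS dT dr dn : ℕ}
    (hA₁ : A₁.totalDegree ≤ dA) (hA₂ : A₂.totalDegree ≤ dA) (hS : S.totalDegree ≤ dS)
    (hT : T.totalDegree ≤ dT) (hr : r.totalDegree ≤ dr) (hn : n.totalDegree ≤ dn) :
    (combine A₁ A₂ S T r n).totalDegree ≤ 4 * (4 * dA + 2 * dS + 2 * dT + dr + dn) := by
  have weight_le : (combineWeight A₁ A₂).totalDegree ≤ 2 * dA := by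
    grind -ring [combineWeight, totalDegree_add, totalDegree_pow, totalDegree_one]
  have factor_le : (S ^ 2 * (2 * r - 1)).totalDegree ≤ 2 * dS + dr := by
    grind -ring [totalDegree_sub, totalDegree_mul, totalDegree_pow, totalDegree_ofNat,
      totalDegree_one]
  have base_le : (S ^ 2 * n + T ^ 2 -
      S ^ 2 * (2 * r - 1) * (T ^ 2 + combineWeight A₁ A₂ ^ 2)).totalDegree ≤
        4 * dA + 2 * dS + 2 * dT + dr + dn := by
    grind -ring [totalDegree_add, totalDegree_sub, totalDegree_mul, totalDegree_pow]
  rw [combine, fourSignProd]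
  grind -ring [totalDegree_add, totalDegree_sub, totalDegree_mul, totalDegree_pow,
    totalDegree_ofNat]

namespace Bridge

/-- Bounds for the degrees of the quantities of a `Bridge` consisting of polynomials. -/
structure DegreeLE (p : Bridge (MvPolynomial σ R)) (d : ℕ) : Prop where
  X : p.X.totalDegree ≤ d
  Y : p.Y.totalDegree ≤ d
  b : p.b.totalDegree ≤ 4
  μ : p.μ.totalDegree ≤ d
  g : p.g.totalDegree ≤ 1
  h : p.h.totalDegree ≤ 1
  k : p.k.totalDegree ≤ 1
  l : p.l.totalDegree ≤ 1
  w : p.w.totalDegree ≤ 1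
  x : p.x.totalDegree ≤ 1
  y : p.y.totalDegree ≤ 1

variable {p : Bridge (MvPolynomial σ R)} {d : ℕ} (hp : p.DegreeLE d)

include hp

theorem totalDegree_V_le : p.V.totalDegree ≤ 3 * d + 2 := by
  grind -ring [V, hp.Y, hp.μ, hp.w, totalDegree_add, totalDegree_mul, totalDegree_pow,
    totalDegree_ofNat, totalDegree_one]

theorem totalDegree_U_le : p.U.totalDegree ≤ 4 * d + 2 := by
  grind -ring [U, hp.l, hp.X, hp.Y, totalDegree_mul, totalDegree_pow, totalDegree_ofNat]

theorem totalDegree_A_le : p.A.totalDegree ≤ 7 * d + 4 := by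
  grind -ring [A, totalDegree_U_le hp, totalDegree_V_le hp, totalDegree_add, totalDegree_mul,
    totalDegree_one]

theorem totalDegree_B_le : p.B.totalDegree ≤ 11 * d + 6 := by
  grind -ring [B, totalDegree_U_le hp, totalDegree_V_le hp, totalDegree_mul, totalDegree_pow,
    totalDegree_ofNat]

theorem totalDegree_C_le : p.C.totalDegree ≤ 7 * d + 5 := by
  grind -ring [C, hp.X, hp.h, totalDegree_A_le hp, totalDegree_add, totalDegree_sub,
    totalDegree_mul, totalDegree_ofNat, totalDegree_one]

theorem totalDegree_J_le : p.J.totalDegree ≤ 11 * d + 7 := by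
  grind -ring [J, hp.X, hp.k, totalDegree_B_le hp, totalDegree_add, totalDegree_sub,
    totalDegree_mul, totalDegree_one]

theorem totalDegree_P₁_le : p.P₁.totalDegree ≤ 728 * d + 492 := by
  have A_le := totalDegree_A_le hp
  have C_le := totalDegree_C_le hp
  have D_le := totalDegree_pellSq_le A_le C_le
  have E_le : (pellE p.A p.C p.x).totalDegree ≤ 42 * d + 29 := by
    grind -ring [pellE, hp.x, totalDegree_mul, totalDegree_pow]
  have F_le : (pellF p.A p.C p.x).totalDegree ≤ 98 * d + 66 :=
    (totalDegree_pellSq_le A_le E_le).trans (by lia)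
  have G_le : (pellG p.A p.C p.x).totalDegree ≤ 196 * d + 132 := by
    grind -ring [pellG, totalDegree_add, totalDegree_sub, totalDegree_mul]
  have H_le : (pellH p.A (2 * p.X + 1) p.C p.x p.y).totalDegree ≤ 105 * d + 72 := by
    grind -ring [pellH, hp.X, hp.y, totalDegree_add, totalDegree_mul, totalDegree_ofNat,
      totalDegree_one]
  have I_le := totalDegree_pellSq_le G_le H_le
  rw [P₁, pellTriple]
  grind -ring [totalDegree_mul]

theorem totalDegree_P₂_le : p.P₂.totalDegree ≤ 44 * d + 26 :=
  (totalDegree_pellSq_le (totalDegree_B_le hp) (totalDegree_J_le hp)).trans (by lia)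

theorem totalDegree_S_le : p.S.totalDegree ≤ 7 * d + 4 := by
  grind -ring [S, totalDegree_A_le hp, totalDegree_sub, totalDegree_mul, totalDegree_ofNat]

theorem totalDegree_T_le : p.T.totalDegree ≤ 14 * d + 20 := by
  have bw_le : (2 * p.b * p.w ^ 2).totalDegree ≤ 6 := by
    grind -ring [hp.b, hp.w, totalDegree_mul, totalDegree_pow, totalDegree_ofNat]
  rw [T]
  grind -ring [totalDegree_A_le hp, totalDegree_C_le hp, totalDegree_add, totalDegree_sub,
    totalDegree_mul, totalDegree_pow, totalDegree_ofNat, totalDegree_one]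

theorem totalDegree_Q_le : p.Q.totalDegree ≤ 26 * d + 30 := by
  have CJ_le : (p.C - p.l * p.Y * p.J).totalDegree ≤ 12 * d + 8 := by
    grind -ring [hp.l, hp.Y, totalDegree_C_le hp, totalDegree_J_le hp, totalDegree_sub,
      totalDegree_mul]
  have gμ_le : (2 * p.g + 1 - p.μ).totalDegree ≤ d + 1 := by
    grind -ring [hp.g, hp.μ, totalDegree_add, totalDegree_sub, totalDegree_mul,
      totalDegree_ofNat, totalDegree_one]
  rw [Q]
  grind -ring [hp.x, hp.l, hp.μ, totalDegree_J_le hp, totalDegree_sub, totalDegree_mul,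
    totalDegree_pow, totalDegree_ofNat]

theorem totalDegree_form_le {n : MvPolynomial σ R} {e : ℕ} (hn : n.totalDegree ≤ e) :
    (p.form n).totalDegree ≤ 11920 * d + 4 * e + 8184 :=
  (totalDegree_combine_le (totalDegree_P₁_le hp)
    ((totalDegree_P₂_le hp).trans (by lia)) (totalDegree_S_le hp) (totalDegree_T_le hp)
    (totalDegree_Q_le hp) hn).trans (by lia)

end Bridge

end Degree

/-! ### A divisibility criterion for the solvability of a polynomial equation -/

/-- A polynomial whose zeros in `ℕ` are to be encoded, together with the parameters of the encoding:
a positive bound `δ` for its degree and an exponent `e` for which `2 ^ e` dominates the coefficients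
that occur. -/
structure CodeData (ν : ℕ) where
  P : MvPolynomial (Fin (ν + 1)) ℤ
  δ : ℕ
  e : ℕ
  δ_pos : 0 < δ
  totalDegree_le : P.totalDegree ≤ δ
  codeBound_lt : 2 ^ δ * codeBound δ P < 2 ^ e

namespace CodeData

variable {ν : ℕ} (c : CodeData ν)

/-- The number of base-`B` digits reserved for the code of the unknowns. -/
def L : ℕ := (c.δ + 1) ^ (ν + 1)

theorem two_le_L : 2 ≤ c.L :=
  (Nat.succ_le_succ c.δ_pos).trans (Nat.le_self_pow ν.succ_ne_zero _)

theorem strictMono_exponent : StrictMono fun j ↦ (c.δ + 1) ^ (j + 1) := fun _ _ h ↦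
  Nat.pow_lt_pow_right (Nat.succ_lt_succ c.δ_pos) (Nat.succ_lt_succ h)

section CommSemiring

variable {R R' : Type*} [CommSemiring R] [CommSemiring R'] (b : R)

/-- The shift which makes all digits nonnegative: half of the base. -/
def H : R := 2 ^ c.e * b ^ c.δ

/-- The base of the encoding of unknowns below `b`. -/
def B : R := 2 * c.H b

/-- The strict upper bound for the code of the unknowns. -/
def μ : R := c.B b ^ c.L

/-- The strict upper bound for both numbers whose binary digits are compared. -/
def N : R := c.B b ^ ((c.δ + 2) * c.L + 2)

/-- The number which has to divide a central binomial coefficient. -/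
def Y : R := c.N b ^ 2

variable (φ : R →+* R')

theorem map_H : φ (c.H b) = c.H (φ b) := by simp [H, map_ofNat]

theorem map_B : φ (c.B b) = c.B (φ b) := by simp [B, map_H, map_ofNat]

theorem map_μ : φ (c.μ b) = c.μ (φ b) := by simp [μ, map_B]

theorem map_N : φ (c.N b) = c.N (φ b) := by simp [N, map_B]

theorem map_Y : φ (c.Y b) = c.Y (φ b) := by simp [Y, map_N]

end CommSemiring

section CommRing

variable {R R' : Type*} [CommRing R] [CommRing R'] (a b g : R)

/-- The mask for the code of the unknowns: the code of unknowns below `b`, a power of two, has no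
binary digit in common with it. -/
def M : R := c.μ b - 1 - ∑ j : Fin ν, (b - 1) * c.B b ^ (c.δ + 1) ^ (j + 1 : ℕ)

/-- The number whose base-`B` digit of index `L` tells whether the unknowns with code `g` and
parameter `a` form a zero of `P`. -/
noncomputable def K : R :=
  (1 + a * c.B b + g) ^ c.δ * Polynomial.aeval (c.B b) (dualPoly c.δ c.P) +
    c.H b * ∑ j ∈ Finset.range ((c.δ + 1) * c.L + 1), c.B b ^ j

/-- The data of the encoding: the code `g` followed by `K`. -/
noncomputable def S : R := g + c.μ b * c.K a b g

/-- The mask for `S`: binary digits at which `S` has to vanish. -/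
def T : R := c.M b + c.μ b * (c.μ b * (c.H b - 1))

/-- The number in whose central binomial coefficient the power of `2` counts the common binary
digits of `S` and `T`. -/
noncomputable def X : R :=
  (c.N b - 1) * ((c.S a b g + c.T b + 1) * c.N b + c.T b + 1)

variable (φ : R →+* R')

theorem map_M : φ (c.M b) = c.M (φ b) := by simp [M, map_B, map_μ]

theorem map_K : φ (c.K a b g) = c.K (φ a) (φ b) (φ g) := by
  have := Polynomial.aeval_algHom_apply φ.toIntAlgHom (c.B b) (dualPoly c.δ c.P)
  simp only [RingHom.toIntAlgHom_apply, map_B] at this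
  simp [K, map_B, map_H, this]

theorem map_S : φ (c.S a b g) = c.S (φ a) (φ b) (φ g) := by simp [S, map_K, map_μ]

theorem map_T : φ (c.T b) = c.T (φ b) := by simp [T, map_M, map_μ, map_H]

theorem map_X : φ (c.X a b g) = c.X (φ a) (φ b) (φ g) := by simp [X, map_S, map_T, map_N]

end CommRing

section Nat

variable {a b g : ℕ}

@[norm_cast]
theorem natCast_H (b : ℕ) : ((c.H b : ℕ) : ℤ) = c.H (b : ℤ) :=
  c.map_H b (Nat.castRingHom ℤ)

@[norm_cast]
theorem natCast_B (b : ℕ) : ((c.B b : ℕ) : ℤ) = c.B (b : ℤ) :=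
  c.map_B b (Nat.castRingHom ℤ)

@[norm_cast]
theorem natCast_μ (b : ℕ) : ((c.μ b : ℕ) : ℤ) = c.μ (b : ℤ) :=
  c.map_μ b (Nat.castRingHom ℤ)

@[norm_cast]
theorem natCast_N (b : ℕ) : ((c.N b : ℕ) : ℤ) = c.N (b : ℤ) :=
  c.map_N b (Nat.castRingHom ℤ)

@[norm_cast]
theorem natCast_Y (b : ℕ) : ((c.Y b : ℕ) : ℤ) = c.Y (b : ℤ) :=
  c.map_Y b (Nat.castRingHom ℤ)

theorem le_H (b : ℕ) : b ≤ c.H b :=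
  (Nat.le_self_pow c.δ_pos.ne' b).trans (Nat.le_mul_of_pos_left _ (Nat.two_pow_pos _))

theorem two_le_B (hb : 0 < b) : 2 ≤ c.B b := by
  have := c.le_H b
  rw [B]
  lia

theorem B_pos (hb : 0 < b) : 0 < c.B b := two_pos.trans_le (c.two_le_B hb)

theorem le_B (b : ℕ) : b ≤ c.B b := by
  have := c.le_H b
  rw [B]
  lia

theorem le_μ (b : ℕ) : b ≤ c.μ b :=
  (c.le_B b).trans (Nat.le_self_pow (two_pos.trans_le c.two_le_L).ne' _)

theorem lt_N (hb : 0 < b) : b < c.N b := by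
  refine (c.le_B b).trans_lt ?_
  simpa [N] using Nat.pow_lt_pow_right (c.two_le_B hb)
    (show 1 < (c.δ + 2) * c.L + 2 by lia)

theorem N_eq_μ_mul (b : ℕ) : c.N b = c.μ b * c.B b ^ ((c.δ + 1) * c.L + 2) := by
  rw [N, μ, ← pow_add]
  ring_nf

theorem one_add_mul_B_add_le (hab : a < b) (hg : g < c.μ b) :
    1 + a * c.B b + g ≤ 2 * c.μ b := by
  have : a * c.B b ≤ c.μ b :=
    calc a * c.B b ≤ c.B b ^ 2 := by
          rw [sq]
          exact Nat.mul_le_mul_right _ (hab.le.trans (c.le_B b))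
      _ ≤ c.μ b := Nat.pow_le_pow_right (c.B_pos (Nat.zero_lt_of_lt hab)) c.two_le_L
  lia

theorem abs_code_mul_dual_lt (hab : a < b) (hg : g < c.μ b) :
    |(1 + a * c.B (b : ℤ) + g) ^ c.δ * Polynomial.aeval (c.B (b : ℤ)) (dualPoly c.δ c.P)| <
      c.H (b : ℤ) * c.B (b : ℤ) ^ ((c.δ + 1) * c.L) := by
  have hb : 0 < b := Nat.zero_lt_of_lt hab
  have B_pos : 0 < c.B (b : ℤ) := by exact_mod_cast c.B_pos hb
  have code_le : (1 + a * c.B (b : ℤ) + g) ≤ 2 * c.B (b : ℤ) ^ c.L := by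
    exact_mod_cast c.one_add_mul_B_add_le hab hg
  have dual_le := abs_eval_dualPoly_le c.δ c.P B_pos
  have bound_lt : (2 : ℤ) ^ c.δ * codeBound c.δ c.P < c.H (b : ℤ) := by
    have : 2 ^ c.e ≤ c.H b := Nat.le_mul_of_pos_right _ (Nat.pow_pos hb)
    exact_mod_cast c.codeBound_lt.trans_le this
  rw [Polynomial.coe_aeval_eq_eval, abs_mul, abs_of_nonneg (by positivity)]
  calc (1 + a * c.B (b : ℤ) + g) ^ c.δ * |(dualPoly c.δ c.P).eval (c.B (b : ℤ))|
      ≤ (2 * c.B (b : ℤ) ^ c.L) ^ c.δ * (codeBound c.δ c.P * c.B (b : ℤ) ^ c.L) := by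
        gcongr
        exact dual_le
    _ = 2 ^ c.δ * codeBound c.δ c.P * c.B (b : ℤ) ^ ((c.δ + 1) * c.L) := by ring
    _ < c.H (b : ℤ) * c.B (b : ℤ) ^ ((c.δ + 1) * c.L) := by gcongr

theorem K_mem_Ico (hab : a < b) (hg : g < c.μ b) :
    c.K (a : ℤ) b g ∈ Set.Ico 0 (c.B (b : ℤ) ^ ((c.δ + 1) * c.L + 2)) := by
  have main := abs_lt.1 (c.abs_code_mul_dual_lt hab hg)
  have two_le_B : 2 ≤ c.B b := c.two_le_B (Nat.zero_lt_of_lt hab)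
  have B_pos : 0 < c.B (b : ℤ) := by exact_mod_cast two_pos.trans_le two_le_B
  have H_nonneg : 0 ≤ c.H (b : ℤ) := by exact_mod_cast Nat.zero_le (c.H b)
  set E := (c.δ + 1) * c.L
  have le_sum : c.B (b : ℤ) ^ E ≤ ∑ j ∈ Finset.range (E + 1), c.B (b : ℤ) ^ j :=
    Finset.single_le_sum (fun _ _ ↦ by positivity) (Finset.self_mem_range_succ E)
  have sum_le : ∑ j ∈ Finset.range (E + 1), c.B (b : ℤ) ^ j ≤ c.B (b : ℤ) ^ (E + 1) := by
    exact_mod_cast (Nat.geomSum_lt two_le_B fun _ ↦ Finset.mem_range.1).le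
  have lower := mul_le_mul_of_nonneg_left le_sum H_nonneg
  have upper := mul_le_mul_of_nonneg_left sum_le H_nonneg
  have : c.H (b : ℤ) * c.B (b : ℤ) ^ E ≤ c.H (b : ℤ) * c.B (b : ℤ) ^ (E + 1) := by
    gcongr
    lia
  have pow_eq : c.B (b : ℤ) ^ (E + 2) = 2 * (c.H (b : ℤ) * c.B (b : ℤ) ^ (E + 1)) := by
    rw [pow_succ', B]
    ring
  rw [K]
  constructor <;> linarith

/-- The value of `K` as a natural number. -/
noncomputable def natK (a b g : ℕ) : ℕ := (c.K (a : ℤ) b g).toNat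

/-- The value of `S` as a natural number. -/
noncomputable def natS (a b g : ℕ) : ℕ := g + c.μ b * c.natK a b g

/-- The code of the unknowns all of which are `b - 1`. -/
def maxCode (b : ℕ) : ℕ := ∑ j : Fin ν, (b - 1) * c.B b ^ (c.δ + 1) ^ (j + 1 : ℕ)

/-- The value of `T` as a natural number. -/
def natT (b : ℕ) : ℕ := c.μ b - 1 - c.maxCode b + c.μ b * (c.μ b * (c.H b - 1))

/-- The value of `X` as a natural number. -/
noncomputable def natX (a b g : ℕ) : ℕ :=
  (c.N b - 1) * ((c.natS a b g + c.natT b + 1) * c.N b + c.natT b + 1)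

theorem natCast_natK (hab : a < b) (hg : g < c.μ b) :
    (c.natK a b g : ℤ) = c.K (a : ℤ) b g :=
  Int.toNat_of_nonneg (c.K_mem_Ico hab hg).1

theorem natCast_natS (hab : a < b) (hg : g < c.μ b) :
    (c.natS a b g : ℤ) = c.S (a : ℤ) b g := by
  rw [natS, S, Nat.cast_add, Nat.cast_mul, natCast_natK c hab hg, natCast_μ]

theorem maxCode_lt (hb : 0 < b) : c.maxCode b < c.μ b :=
  sum_mul_pow_lt (c.B_pos hb) c.strictMono_exponent fun _ ↦
    (Nat.sub_one_lt hb.ne').trans_le (c.le_B b)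

theorem natCast_natT (hb : 0 < b) : (c.natT b : ℤ) = c.T (b : ℤ) := by
  have H_pos : 1 ≤ c.H b := hb.trans_le (c.le_H b)
  have := c.maxCode_lt hb
  rw [natT, T, M, Nat.sub_sub, Nat.cast_add, Nat.cast_sub (by lia)]
  push_cast [maxCode, Nat.cast_sub H_pos, Nat.cast_sub hb, natCast_μ, natCast_B, natCast_H]
  ring

theorem natCast_natX (hab : a < b) (hg : g < c.μ b) :
    (c.natX a b g : ℤ) = c.X (a : ℤ) b g := by
  have hb : 0 < b := Nat.zero_lt_of_lt hab
  rw [natX, X]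
  push_cast [Nat.cast_sub (Nat.zero_lt_of_lt (c.lt_N hb)), natCast_natS c hab hg,
    natCast_natT c hb, natCast_N]
  ring

theorem le_natX (a g : ℕ) (hb : 0 < b) : b ≤ c.natX a b g :=
  (Nat.le_sub_one_of_lt (c.lt_N hb)).trans (Nat.le_mul_of_pos_right _ (by lia))

theorem add_μ_mul_lt_N {m : ℕ} (hg : g < c.μ b)
    (hm : m < c.B b ^ ((c.δ + 1) * c.L + 2)) : g + c.μ b * m < c.N b :=
  calc g + c.μ b * m < c.μ b * (m + 1) := by lia
    _ ≤ c.N b := by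
      rw [N_eq_μ_mul]
      exact Nat.mul_le_mul_left _ hm

theorem natS_lt (hab : a < b) (hg : g < c.μ b) : c.natS a b g < c.N b := by
  refine c.add_μ_mul_lt_N hg ?_
  have := (c.K_mem_Ico hab hg).2
  rw [← natCast_natK c hab hg] at this
  exact_mod_cast this

theorem natT_lt (hb : 0 < b) : c.natT b < c.N b := by
  have := c.maxCode_lt hb
  have H_lt : c.H b - 1 < c.B b := by
    rw [B]
    have := hb.trans_le (c.le_H b)
    lia
  refine c.add_μ_mul_lt_N (by lia) ?_
  calc c.μ b * (c.H b - 1) < c.μ b * c.B b := Nat.mul_lt_mul_of_pos_left H_lt (by lia)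
    _ = c.B b ^ (c.L + 1) := (pow_succ _ _).symm
    _ ≤ c.B b ^ ((c.δ + 1) * c.L + 2) :=
      Nat.pow_le_pow_right (c.B_pos hb) (by
        have := Nat.le_mul_of_pos_left c.L c.δ.succ_pos
        lia)

theorem H_two_pow (i : ℕ) : c.H (2 ^ i) = 2 ^ (c.e + i * c.δ) := by
  rw [H, pow_add, pow_mul]

theorem B_two_pow (i : ℕ) : c.B (2 ^ i) = 2 ^ (c.e + i * c.δ + 1) := by
  rw [B, H_two_pow, pow_succ']

theorem μ_two_pow (i : ℕ) : c.μ (2 ^ i) = 2 ^ ((c.e + i * c.δ + 1) * c.L) := by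
  rw [μ, B_two_pow, pow_mul]

theorem N_two_pow (i : ℕ) :
    c.N (2 ^ i) = 2 ^ ((c.e + i * c.δ + 1) * ((c.δ + 2) * c.L + 2)) := by
  rw [N, B_two_pow, pow_mul]

theorem and_maxCode_eq_self_iff (i g : ℕ) :
    g &&& c.maxCode (2 ^ i) = g ↔ ∃ z : Fin ν → ℕ, (∀ j, z j < 2 ^ i) ∧
      g = ∑ j, z j * c.B (2 ^ i) ^ (c.δ + 1) ^ (j + 1 : ℕ) := by
  have : i ≤ c.e + i * c.δ + 1 := by
    have := Nat.le_mul_of_pos_right i c.δ_pos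
    lia
  rw [maxCode, B_two_pow]
  exact and_sum_pow_eq_self_iff this c.strictMono_exponent ν g

theorem natS_and_natT_eq_zero_iff {i : ℕ} (hg : g < c.μ (2 ^ i)) :
    c.natS a (2 ^ i) g &&& c.natT (2 ^ i) = 0 ↔
      g &&& c.maxCode (2 ^ i) = g ∧ c.natK a (2 ^ i) g / c.μ (2 ^ i) % c.H (2 ^ i) = 0 := by
  have maxCode_lt := c.maxCode_lt (Nat.two_pow_pos i)
  rw [μ_two_pow] at hg maxCode_lt
  rw [natS, natT, μ_two_pow, H_two_pow]
  exact and_mask_eq_zero_iff hg maxCode_lt _ _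

theorem Y_dvd_centralBinom_natX_iff {i : ℕ} (hab : a < 2 ^ i) (hg : g < c.μ (2 ^ i)) :
    c.Y (2 ^ i) ∣ (c.natX a (2 ^ i) g).centralBinom ↔
      c.natS a (2 ^ i) g &&& c.natT (2 ^ i) = 0 := by
  have S_lt := c.natS_lt hab hg
  have T_lt := c.natT_lt (Nat.two_pow_pos i)
  rw [N_two_pow] at S_lt T_lt
  rw [Y, natX, N_two_pow]
  exact two_pow_sq_dvd_centralBinom_iff S_lt T_lt

theorem natK_div_mod_eq_zero_iff (hab : a < b) {z : Fin ν → ℕ} (hz : ∀ j, z j < b)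
    (hg : g < c.μ b) (hgz : g = ∑ j, z j * c.B b ^ (c.δ + 1) ^ (j + 1 : ℕ)) :
    c.natK a b g / c.μ b % c.H b = 0 ↔
      MvPolynomial.eval (Fin.cons (a : ℤ) fun i ↦ (z i : ℤ)) c.P = 0 := by
  have hb : 0 < b := Nat.zero_lt_of_lt hab
  have hx : ∀ i, (Fin.cons a z : Fin (ν + 1) → ℕ) i ≤ b :=
    Fin.cases hab.le fun j ↦ (hz j).le
  have hH : codeBound c.δ c.P * (b : ℤ) ^ c.δ < c.H (b : ℤ) := by
    have : codeBound c.δ c.P < 2 ^ c.e :=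
      (Nat.le_mul_of_pos_left _ (Nat.two_pow_pos _)).trans_lt c.codeBound_lt
    exact mul_lt_mul_of_pos_right (by exact_mod_cast this) (by positivity)
  have cons_cast : (fun i ↦ ((Fin.cons a z : Fin (ν + 1) → ℕ) i : ℤ)) =
      Fin.cons (a : ℤ) fun i ↦ (z i : ℤ) := by
    ext i
    cases i using Fin.cases <;> rfl
  have sum_eq : 1 + ∑ i, ((Fin.cons a z : Fin (ν + 1) → ℕ) i : ℤ) *
      (2 * c.H (b : ℤ)) ^ (c.δ + 1) ^ (i : ℕ) = 1 + a * c.B (b : ℤ) + g := by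
    rw [Fin.sum_univ_succ, hgz]
    push_cast [natCast_B]
    simp [B, add_assoc]
  have key := digit_emod_eq_zero_iff_eval_eq_zero c.totalDegree_le hb hx hH
  rw [sum_eq, cons_cast, ← Polynomial.coe_aeval_eq_eval] at key
  rw [← key]
  change _ ↔ c.K (a : ℤ) b g / c.μ (b : ℤ) % c.H (b : ℤ) = 0
  rw [← natCast_natK c hab hg]
  norm_cast

theorem Y_dvd_centralBinom_natX_iff_exists {i : ℕ} (hab : a < 2 ^ i) (hg : g < c.μ (2 ^ i)) :
    c.Y (2 ^ i) ∣ (c.natX a (2 ^ i) g).centralBinom ↔ ∃ z : Fin ν → ℕ, (∀ j, z j < 2 ^ i) ∧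
      g = ∑ j, z j * c.B (2 ^ i) ^ (c.δ + 1) ^ (j + 1 : ℕ) ∧
      MvPolynomial.eval (Fin.cons (a : ℤ) fun i ↦ (z i : ℤ)) c.P = 0 := by
  rw [Y_dvd_centralBinom_natX_iff c hab hg, natS_and_natT_eq_zero_iff c hg,
    and_maxCode_eq_self_iff]
  constructor
  · rintro ⟨⟨z, hz, hgz⟩, digit_eq⟩
    exact ⟨z, hz, hgz, (c.natK_div_mod_eq_zero_iff hab hz hg hgz).1 digit_eq⟩
  · rintro ⟨z, hz, hgz, eval_eq⟩
    exact ⟨⟨z, hz, hgz⟩, (c.natK_div_mod_eq_zero_iff hab hz hg hgz).2 eval_eq⟩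

end Nat

end CodeData

/-! ### From unknowns in `ℕ` to eleven unknowns in `ℤ` -/

section UnknownBound

variable {R R' : Type*} [CommRing R] [CommRing R']

/-- The bound for the unknowns when the parameter is `a`. It exceeds `a` for every integer `f`, and
for suitable `f` it is an arbitrarily large power of `4`. -/
def unknownBound (a f : R) : R := ((2 * a + 3) * f + (a + 2)) ^ 2

theorem map_unknownBound (φ : R →+* R') (a f : R) :
    φ (unknownBound a f) = unknownBound (φ a) (φ f) := by
  simp only [unknownBound, map_pow, map_add, map_mul, map_ofNat]

theorem lt_unknownBound (a : ℕ) (f : ℤ) : a < unknownBound (a : ℤ) f := by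
  rw [unknownBound]
  rcases le_or_gt 0 f with hf | hf
  · nlinarith [mul_nonneg (show (0 : ℤ) ≤ 2 * a + 3 by positivity) hf]
  · have : (2 * a + 3) * f ≤ -(2 * a + 3) := by nlinarith
    nlinarith

theorem exists_lt_two_pow_and_dvd (a m : ℕ) :
    ∃ j : ℕ, m < 2 ^ j ∧ (2 * a + 3 : ℤ) ∣ 2 ^ j - (a + 2) := by
  have coprime : Nat.Coprime 2 (2 * a + 3) := Nat.coprime_two_left.2 ⟨a + 1, by ring⟩
  have totient_pos : 0 < (2 * a + 3).totient := Nat.totient_pos.2 (by lia)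
  obtain ⟨j, hj⟩ := Nat.exists_eq_add_of_lt (Nat.mul_pos totient_pos m.succ_pos)
  have m_le : m + 1 ≤ (2 * a + 3).totient * (m + 1) := Nat.le_mul_of_pos_left _ totient_pos
  refine ⟨j, (show m ≤ j by lia).trans_lt Nat.lt_two_pow_self, ?_⟩
  have pow_modEq : 2 ^ (j + 1) ≡ 1 [MOD 2 * a + 3] := by
    have := (Nat.ModEq.pow_totient coprime).pow (m + 1)
    rwa [← pow_mul, one_pow, hj, zero_add] at this
  have dvd_double : (2 * a + 3 : ℤ) ∣ 2 * (2 ^ j - (a + 2)) := by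
    have := dvd_sub (Nat.modEq_iff_dvd.1 pow_modEq.symm) (dvd_refl ((2 * a + 3 : ℕ) : ℤ))
    push_cast at this
    rwa [show (2 * (2 ^ j - (a + 2)) : ℤ) = 2 ^ (j + 1) - 1 - (2 * a + 3) by ring]
  have isCoprime : IsCoprime (2 * a + 3 : ℤ) 2 := by
    exact_mod_cast Nat.isCoprime_iff_coprime.2 coprime.symm
  exact isCoprime.dvd_of_dvd_mul_left dvd_double

theorem exists_unknownBound_eq_four_pow (a m : ℕ) :
    ∃ (f : ℤ) (j : ℕ), m < 4 ^ j ∧ unknownBound (a : ℤ) f = 4 ^ j := by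
  obtain ⟨j, hj, f, hf⟩ := exists_lt_two_pow_and_dvd a m
  refine ⟨f, j, hj.trans_le (Nat.pow_le_pow_left (by norm_num) j), ?_⟩
  rw [unknownBound, ← hf, sub_add_cancel, ← pow_mul, mul_comm, pow_mul]
  norm_num

end UnknownBound

theorem sq_add_self_nonneg (u : ℤ) : 0 ≤ u ^ 2 + u := by
  rcases le_or_gt 0 u with hu | hu <;> nlinarith

namespace CodeData

variable {ν : ℕ} (c : CodeData ν)

section CommRing

variable {R R' : Type*} [CommRing R] [CommRing R']

/-- The quantities which express the divisibility criterion for `c` at the parameter `a`. -/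
noncomputable def bridge (a f g h k l w x y : R) : Bridge R where
  X := c.X a (unknownBound a f) g
  Y := c.Y (unknownBound a f)
  b := unknownBound a f
  μ := c.μ (unknownBound a f)
  g := g
  h := h
  k := k
  l := l
  w := w
  x := x
  y := y

/-- The polynomial in eleven integer unknowns `z` which represents the same set as `c.P` does with
unknowns in `ℕ`. The last three unknowns stand for an element of `ℕ`. -/
noncomputable def form (a : R) (z : Fin 11 → R) : R :=
  (c.bridge a (z 0) (z 1) (z 2) (z 3) (z 4) (z 5) (z 6) (z 7)).form
    (z 8 ^ 2 + z 8 + z 9 ^ 2 + z 9 + z 10 ^ 2)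

theorem map_bridge (φ : R →+* R') (a f g h k l w x y : R) :
    (c.bridge a f g h k l w x y).map φ =
      c.bridge (φ a) (φ f) (φ g) (φ h) (φ k) (φ l) (φ w) (φ x) (φ y) := by
  simp only [bridge, Bridge.map, map_X, map_Y, map_μ, map_unknownBound]

theorem map_form (φ : R →+* R') (a : R) (z : Fin 11 → R) :
    φ (c.form a z) = c.form (φ a) fun i ↦ φ (z i) := by
  rw [form, ← Bridge.map_form, map_bridge]
  simp only [form, map_add, map_pow]

end CommRing

section Int

theorem exists_form_eq_zero_iff_exists_isSolution (a : ℤ) :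
    (∃ z : Fin 11 → ℤ, c.form a z = 0) ↔
      ∃ f g h k l w x y : ℤ, (c.bridge a f g h k l w x y).IsSolution := by
  simp only [← Bridge.exists_form_eq_zero_iff]
  constructor
  · rintro ⟨z, hz⟩
    have nonneg : 0 ≤ z 8 ^ 2 + z 8 + z 9 ^ 2 + z 9 + z 10 ^ 2 := by
      linarith [sq_add_self_nonneg (z 8), sq_add_self_nonneg (z 9), sq_nonneg (z 10)]
    obtain ⟨n, hn⟩ := Int.eq_ofNat_of_zero_le nonneg
    exact ⟨z 0, z 1, z 2, z 3, z 4, z 5, z 6, z 7, n, hn ▸ hz⟩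
  · rintro ⟨f, g, h, k, l, w, x, y, n, hn⟩
    obtain ⟨u, v, t, huvt⟩ := exists_eq_sq_add_self_add_sq_add_self_add_sq n
    rw [huvt] at hn
    exact ⟨![f, g, h, k, l, w, x, y, u, v, t], hn⟩

variable {a : ℕ}

theorem bridge_eq_natCast {b g : ℕ} {f : ℤ} (hb : unknownBound (a : ℤ) f = b) (hab : a < b)
    (hg : g < c.μ b) (h k l w x y : ℤ) : c.bridge (a : ℤ) f g h k l w x y =
      ⟨c.natX a b g, (c.Y b : ℕ), b, (c.μ b : ℕ), g, h, k, l, w, x, y⟩ := by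
  rw [bridge, hb, natCast_natX c hab hg, natCast_Y, natCast_μ]

theorem exists_eval_eq_zero_of_isSolution {f g h k l w x y : ℤ}
    (hs : (c.bridge (a : ℤ) f g h k l w x y).IsSolution) :
    ∃ z : Fin ν → ℕ, MvPolynomial.eval (Fin.cons (a : ℤ) fun i ↦ (z i : ℤ)) c.P = 0 := by
  obtain ⟨b, hb⟩ : ∃ b : ℕ, unknownBound (a : ℤ) f = b := Int.eq_ofNat_of_zero_le (sq_nonneg _)
  have hab : a < b := by exact_mod_cast hb ▸ lt_unknownBound a f
  have b_pos : 0 < b := Nat.zero_lt_of_lt hab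
  have b_le_μ : (b : ℤ) ≤ (c.μ b : ℕ) := Int.ofNat_le.2 (c.le_μ b)
  obtain ⟨g_nonneg, g_lt⟩ : g ∈ Set.Ico 0 ((c.μ b : ℕ) : ℤ) := by
    rw [natCast_μ, ← hb]
    refine Bridge.mem_Ico_of_Q_pos ?_ hs.Q_pos
    change 0 < c.μ (unknownBound (a : ℤ) f)
    rw [hb, ← natCast_μ]
    lia
  lift g to ℕ using g_nonneg
  have g_lt : g < c.μ b := Int.ofNat_lt.1 g_lt
  rw [c.bridge_eq_natCast hb hab g_lt] at hs
  have X_pos : 0 < c.natX a b g := b_pos.trans_le (c.le_natX a g b_pos)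
  have Y_pos : (0 : ℤ) < (c.Y b : ℕ) :=
    Int.ofNat_lt.2 (Nat.pow_pos (Nat.zero_lt_of_lt (c.lt_N b_pos)))
  have b_pos' : (0 : ℤ) < b := Int.ofNat_lt.2 b_pos
  have Y_dvd : c.Y b ∣ (c.natX a b g).centralBinom :=
    Int.ofNat_dvd.1 (hs.dvd_centralBinom rfl X_pos Y_pos b_pos' b_le_μ)
  obtain ⟨i, hi⟩ : ∃ i, (b : ℤ) = 2 ^ i := hs.b_eq_two_pow rfl X_pos Y_pos b_pos' b_le_μ
  obtain rfl : b = 2 ^ i := by exact_mod_cast hi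
  obtain ⟨z, -, -, eval_eq⟩ := (c.Y_dvd_centralBinom_natX_iff_exists hab g_lt).1 Y_dvd
  exact ⟨z, eval_eq⟩

theorem exists_isSolution_of_eval_eq_zero {z : Fin ν → ℕ}
    (hz : MvPolynomial.eval (Fin.cons (a : ℤ) fun i ↦ (z i : ℤ)) c.P = 0) :
    ∃ f g h k l w x y : ℤ, (c.bridge (a : ℤ) f g h k l w x y).IsSolution := by
  obtain ⟨f, j, m_lt, hb⟩ := exists_unknownBound_eq_four_pow a (a + ∑ i, z i)
  have hab : a < 4 ^ j := by lia
  have z_lt (i : Fin ν) : z i < 4 ^ j := by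
    have := Finset.single_le_sum (f := z) (fun _ _ ↦ Nat.zero_le _) (Finset.mem_univ i)
    lia
  have b_pos : 0 < 4 ^ j := by positivity
  set g := ∑ i, z i * c.B (4 ^ j) ^ (c.δ + 1) ^ (i + 1 : ℕ) with hg
  have g_lt : g < c.μ (4 ^ j) :=
    sum_mul_pow_lt (c.B_pos b_pos) c.strictMono_exponent fun i ↦ (z_lt i).trans_le (c.le_B _)
  have Y_dvd : c.Y (4 ^ j) ∣ (c.natX a (4 ^ j) g).centralBinom := by
    rw [show 4 ^ j = 2 ^ (2 * j) by rw [pow_mul]; norm_num] at hab z_lt g_lt hg ⊢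
    exact (c.Y_dvd_centralBinom_natX_iff_exists hab g_lt).2 ⟨z, z_lt, hg, hz⟩
  have b_le_X := c.le_natX a g b_pos
  have j_le : j ≤ c.natX a (4 ^ j) g := (Nat.lt_pow_self (by norm_num)).le.trans b_le_X
  obtain ⟨h, k, l, w, x, y, hs⟩ := Bridge.exists_isSolution (b_pos.trans_le b_le_X)
    (Nat.pow_pos (Nat.zero_lt_of_lt (c.lt_N b_pos))) j_le (c.le_μ _)
    ⟨Int.natCast_nonneg g, Int.ofNat_lt.2 g_lt⟩ Y_dvd
  refine ⟨f, g, h, k, l, w, x, y, ?_⟩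
  rw [c.bridge_eq_natCast (by exact_mod_cast hb) hab g_lt]
  exact_mod_cast hs

theorem exists_form_eq_zero_iff (a : ℕ) : (∃ z : Fin 11 → ℤ, c.form (a : ℤ) z = 0) ↔
    ∃ z : Fin ν → ℕ, MvPolynomial.eval (Fin.cons (a : ℤ) fun i ↦ (z i : ℤ)) c.P = 0 := by
  rw [exists_form_eq_zero_iff_exists_isSolution]
  exact ⟨fun ⟨_, _, _, _, _, _, _, _, hs⟩ ↦ c.exists_eval_eq_zero_of_isSolution hs,
    fun ⟨_, hz⟩ ↦ c.exists_isSolution_of_eval_eq_zero hz⟩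

end Int

end CodeData

section TotalDegree

open MvPolynomial

variable {σ R : Type*} [CommRing R] {p q : MvPolynomial σ R} {d e : ℕ}

theorem totalDegree_add_le_of_le (hp : p.totalDegree ≤ d) (hq : q.totalDegree ≤ d) :
    (p + q).totalDegree ≤ d :=
  (totalDegree_add p q).trans (max_le hp hq)

theorem totalDegree_sub_le_of_le (hp : p.totalDegree ≤ d) (hq : q.totalDegree ≤ d) :
    (p - q).totalDegree ≤ d :=
  (totalDegree_sub p q).trans (max_le hp hq)

theorem totalDegree_sub_one_le (hp : p.totalDegree ≤ d) : (p - 1).totalDegree ≤ d :=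
  totalDegree_sub_le_of_le hp (totalDegree_one.trans_le d.zero_le)

theorem totalDegree_mul_le_of_le (hp : p.totalDegree ≤ d) (hq : q.totalDegree ≤ e) :
    (p * q).totalDegree ≤ d + e :=
  (totalDegree_mul p q).trans (add_le_add hp hq)

theorem totalDegree_pow_le_of_le (hp : p.totalDegree ≤ d) (n : ℕ) :
    (p ^ n).totalDegree ≤ n * d :=
  (totalDegree_pow p n).trans (Nat.mul_le_mul_left n hp)

theorem totalDegree_aeval_le {f : Polynomial ℤ} (hf : f.natDegree ≤ e) (hp : p.totalDegree ≤ d) :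
    (Polynomial.aeval p f).totalDegree ≤ e * d := by
  rw [Polynomial.aeval_eq_sum_range]
  refine totalDegree_finsetSum_le fun i hi ↦ (totalDegree_smul_le _ _).trans ?_
  exact (totalDegree_pow_le_of_le hp i).trans
    (Nat.mul_le_mul_right d ((Nat.lt_succ_iff.1 (Finset.mem_range.1 hi)).trans hf))

end TotalDegree

namespace CodeData

section Degree

open MvPolynomial

variable {ν : ℕ} (c : CodeData ν) {σ R : Type*} [CommRing R] {a b g : MvPolynomial σ R}

theorem totalDegree_H_le (hb : b.totalDegree ≤ 4) : (c.H b).totalDegree ≤ 4 * c.δ := by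
  have two_pow_le : (2 ^ c.e : MvPolynomial σ R).totalDegree ≤ c.e * 0 :=
    totalDegree_pow_le_of_le (totalDegree_ofNat 2).le c.e
  exact (totalDegree_mul_le_of_le two_pow_le (totalDegree_pow_le_of_le hb c.δ)).trans (by lia)

theorem totalDegree_B_le (hb : b.totalDegree ≤ 4) : (c.B b).totalDegree ≤ 4 * c.δ :=
  (totalDegree_mul_le_of_le (totalDegree_ofNat 2).le (c.totalDegree_H_le hb)).trans (by lia)

theorem totalDegree_μ_le (hb : b.totalDegree ≤ 4) : (c.μ b).totalDegree ≤ c.L * (4 * c.δ) :=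
  totalDegree_pow_le_of_le (c.totalDegree_B_le hb) c.L

theorem totalDegree_N_le (hb : b.totalDegree ≤ 4) :
    (c.N b).totalDegree ≤ ((c.δ + 2) * c.L + 2) * (4 * c.δ) :=
  totalDegree_pow_le_of_le (c.totalDegree_B_le hb) _

theorem totalDegree_M_le (hb : b.totalDegree ≤ 4) : (c.M b).totalDegree ≤ c.L * (4 * c.δ) := by
  refine totalDegree_sub_le_of_le (totalDegree_sub_one_le (c.totalDegree_μ_le hb))
    (totalDegree_finsetSum_le fun j _ ↦ ?_)
  refine (totalDegree_mul_le_of_le (totalDegree_sub_one_le hb)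
    (totalDegree_pow_le_of_le (c.totalDegree_B_le hb) _)).trans ?_
  have succ_le_L : (c.δ + 1) ^ (j + 1 : ℕ) + 1 ≤ c.L :=
    Nat.pow_lt_pow_right (Nat.succ_lt_succ c.δ_pos) (Nat.succ_lt_succ j.isLt)
  calc 4 + (c.δ + 1) ^ (j + 1 : ℕ) * (4 * c.δ)
      ≤ ((c.δ + 1) ^ (j + 1 : ℕ) + 1) * (4 * c.δ) := by
        have := c.δ_pos
        lia
    _ ≤ c.L * (4 * c.δ) := Nat.mul_le_mul_right _ succ_le_L

theorem totalDegree_K_le (ha : a.totalDegree ≤ 1) (hb : b.totalDegree ≤ 4)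
    (hg : g.totalDegree ≤ 1) :
    (c.K a b g).totalDegree ≤ ((c.δ + 1) * c.L + 1) * (4 * c.δ) := by
  have B_le := c.totalDegree_B_le hb
  have code_le : (1 + a * c.B b + g).totalDegree ≤ 1 + 4 * c.δ :=
    totalDegree_add_le_of_le (totalDegree_add_le_of_le (by simp)
      (totalDegree_mul_le_of_le ha B_le)) (hg.trans (by lia))
  have main_le := totalDegree_mul_le_of_le (totalDegree_pow_le_of_le code_le c.δ)
    (totalDegree_aeval_le (natDegree_dualPoly_le c.δ c.P) B_le)
  have sum_le : (∑ j ∈ Finset.range ((c.δ + 1) * c.L + 1), c.B b ^ j).totalDegree ≤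
      (c.δ + 1) * c.L * (4 * c.δ) :=
    totalDegree_finsetSum_le fun j hj ↦ (totalDegree_pow_le_of_le B_le j).trans
      (Nat.mul_le_mul_right _ (Nat.lt_succ_iff.1 (Finset.mem_range.1 hj)))
  refine totalDegree_add_le_of_le (main_le.trans ?_)
    ((totalDegree_mul_le_of_le (c.totalDegree_H_le hb) sum_le).trans (by lia))
  have := Nat.mul_le_mul_left (c.δ * (4 * c.δ)) c.two_le_L
  have := Nat.le_mul_self c.δ
  rw [← L]
  nlinarith

theorem totalDegree_S_le (ha : a.totalDegree ≤ 1) (hb : b.totalDegree ≤ 4)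
    (hg : g.totalDegree ≤ 1) :
    (c.S a b g).totalDegree ≤ ((c.δ + 2) * c.L + 2) * (4 * c.δ) := by
  have := c.δ_pos
  refine totalDegree_add_le_of_le (hg.trans (by lia)) ?_
  exact (totalDegree_mul_le_of_le (c.totalDegree_μ_le hb) (c.totalDegree_K_le ha hb hg)).trans
    (by lia)

theorem totalDegree_T_le (hb : b.totalDegree ≤ 4) :
    (c.T b).totalDegree ≤ ((c.δ + 2) * c.L + 2) * (4 * c.δ) := by
  have μ_le := c.totalDegree_μ_le hb
  refine totalDegree_add_le_of_le ((c.totalDegree_M_le hb).trans (by lia)) ?_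
  exact (totalDegree_mul_le_of_le μ_le (totalDegree_mul_le_of_le μ_le
    (totalDegree_sub_one_le (c.totalDegree_H_le hb)))).trans (by lia)

theorem totalDegree_X_le (ha : a.totalDegree ≤ 1) (hb : b.totalDegree ≤ 4)
    (hg : g.totalDegree ≤ 1) :
    (c.X a b g).totalDegree ≤ 12 * c.δ * ((c.δ + 2) * c.L + 2) := by
  have N_le := c.totalDegree_N_le hb
  have T_le := c.totalDegree_T_le hb
  have one_le {d : ℕ} : (1 : MvPolynomial σ R).totalDegree ≤ d := by simp
  have inner_le := totalDegree_mul_le_of_le (totalDegree_add_le_of_le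
    (totalDegree_add_le_of_le (c.totalDegree_S_le ha hb hg) T_le) one_le) N_le
  refine (totalDegree_mul_le_of_le (totalDegree_sub_one_le N_le) (totalDegree_add_le_of_le
    (totalDegree_add_le_of_le inner_le (T_le.trans (by lia))) one_le)).trans (by lia)

theorem totalDegree_unknownBound_le {f : MvPolynomial σ R} (ha : a.totalDegree ≤ 1)
    (hf : f.totalDegree ≤ 1) : (unknownBound a f).totalDegree ≤ 4 := by
  grind -ring [unknownBound, totalDegree_add, totalDegree_mul, totalDegree_pow, totalDegree_ofNat]

theorem totalDegree_form_le (ha : a.totalDegree ≤ 1) {z : Fin 11 → MvPolynomial σ R}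
    (hz : ∀ i, (z i).totalDegree ≤ 1) :
    (c.form a z).totalDegree ≤ 11920 * (12 * c.δ * ((c.δ + 2) * c.L + 2)) + 8192 := by
  have b_le := totalDegree_unknownBound_le ha (hz 0)
  have n_le : (z 8 ^ 2 + z 8 + z 9 ^ 2 + z 9 + z 10 ^ 2).totalDegree ≤ 2 := by
    grind -ring [hz 8, hz 9, hz 10, totalDegree_add, totalDegree_pow]
  refine (Bridge.totalDegree_form_le (d := 12 * c.δ * ((c.δ + 2) * c.L + 2)) ⟨?_, ?_, ?_, ?_,
    hz 1, hz 2, hz 3, hz 4, hz 5, hz 6, hz 7⟩ n_le).trans_eq (by ring)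
  · exact c.totalDegree_X_le ha b_le (hz 1)
  · exact (totalDegree_pow_le_of_le (c.totalDegree_N_le b_le) 2).trans (by lia)
  · exact b_le
  · exact (c.totalDegree_μ_le b_le).trans (by lia)

end Degree

/-- Code data for a polynomial of degree at most `δ`. -/
noncomputable def ofTotalDegreeLE {ν δ : ℕ} (hδ : 0 < δ) (P : MvPolynomial (Fin (ν + 1)) ℤ)
    (hP : P.totalDegree ≤ δ) : CodeData ν where
  P := P
  δ := δ
  e := 2 ^ δ * codeBound δ P
  δ_pos := hδ
  totalDegree_le := hP
  codeBound_lt := Nat.lt_two_pow_self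

end CodeData

end UniversalPair

theorem IsUniversalPairInt.mono {ν δ δ' : ℕ} (h : IsUniversalPairInt ν δ) (hδ : δ ≤ δ') :
    IsUniversalPairInt ν δ' := fun A hA ↦
  let ⟨P, hP, hPA⟩ := h A hA
  ⟨P, hP.trans hδ, hPA⟩

open UniversalPair MvPolynomial in
theorem universal_pair_58_4_general {ν δ : ℕ} (hδ : 0 < δ) (h : IsUniversalPairNat ν δ) :
    IsUniversalPairInt 11 (11920 * (12 * δ * ((δ + 2) * (δ + 1) ^ (ν + 1) + 2)) + 8192) := by
  intro A hA
  obtain ⟨P, hP, mem_iff⟩ := h A hA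
  let c := CodeData.ofTotalDegreeLE hδ P hP
  let unknown (i : Fin 11) : MvPolynomial (Fin 12) ℤ := X i.succ
  refine ⟨c.form (X 0) unknown,
    c.totalDegree_form_le (totalDegree_X 0).le fun i ↦ (totalDegree_X i.succ).le, fun a ↦ ?_⟩
  have eval_form (z : Fin 11 → ℤ) :
      eval (Fin.cons (a : ℤ) z) (c.form (X 0) unknown) = c.form (a : ℤ) z := by
    rw [c.map_form]
    simp only [unknown, eval_X, Fin.cons_zero, Fin.cons_succ]
  simp only [eval_form, c.exists_form_eq_zero_iff a]
  exact mem_iff a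

/-- If `(58, 4)` is a universal pair over `ℕ`, then
`(11, 1681043235226619916301182624511918527834137733707408448335539840)`
is a universal pair over `ℤ`. -/
theorem universal_pair_58_4 (h : IsUniversalPairNat 58 4) :
    IsUniversalPairInt 11
      1681043235226619916301182624511918527834137733707408448335539840 :=
  (universal_pair_58_4_general (by norm_num) h).mono (by norm_num)
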